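/- For every fixed integer d ≥ 1, as the integer b → ∞ (with b > d), I(b,d,1) = b·log b + a₁/b + a₂/b² + a₃/b³ + a₄/b⁴ + a₅/b⁵ + O(b⁻⁶), where: a₁ = (d + 1/2)/d²; a₂ = −(9d² + 8d + 2)/(6d³(d+1)); a₃ = (d + 1/2)ζ(2) + (d + 1/2)(2d³ + 4d² + 4d + 1)/(2d⁴(d+1)²); a₄ = −(2d+1)d·ζ(3) + (d + 1/2)ζ(2) − (60d⁷ + 180d⁶ + 350d⁵ + 585d⁴ + 597d³ + 331d² + 96d + 12)/(60d⁵(d+1)³); a₅ = 3(d + 1/2)d²ζ(4) − (3d² + 3d + 5/6)ζ(3) − (d + 1/2)ζ(2) − (12d⁸ − 24d⁷ − 216d⁶ − 387d⁵ − 339d⁴ − 186d³ − 72d² − 18d − 2)/(12d⁶(d+1)³). -/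

import Mathlib

open Filter Asymptotics

/-- The Irwin harmonic sum `I(b,d,k)`: sum of `1/m` over positive integers `m`
whose base-`b` digit list contains the digit `d` exactly `k` times. -/
noncomputable def irwinSum (b d k : ℕ) : ℝ :=
  ∑' m : ℕ, if 0 < m ∧ (Nat.digits b m).count d = k then (1 : ℝ) / m else 0

/-- `ζ(s) = ∑_{n ≥ 1} n^{-s}` for an integer exponent. -/
noncomputable def zetaR (s : ℕ) : ℝ := ∑' n : ℕ, 1 / ((n : ℝ) + 1) ^ s

/-!
Write a positive integer as `m = b ^ l * a + r` with leading digit `a` and `r < b ^ l`. Then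
`1 / m = b⁻ˡ / (a + x)` with `x = r / b ^ l`, so `I(b,d,k+1)` is the integral of
`∑ 1 / (a + x)` over the digits `a ≠ 0, d`, against the discrete measure giving mass `b⁻ˡ` to each
`l`-digit word with `k + 1` occurrences of `d`, plus the integral of `1 / (d + x)` against the
measure for `k` occurrences. Each of these measures has total mass `b`. If both are replaced by `b`
times Lebesgue measure, the logarithms telescope to `b log b`.

The corrections are the discrepancies between the two kinds of measure. Removing the first digit
of a word gives recursions for them in terms of the operator averaging `f ((a + x) / b)` over the
digits `a ≠ d`. This operator divides Lipschitz constants by `b`, so on `L`-Lipschitz functions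
the discrepancy for `k` occurrences is `O(L b ^ (-2k-1))`. After one step of the recursion,
`1 / (n + x / b)` can be expanded in powers of `x / b`. Only a few moments of the discrepancy
matter up to `O(b⁻⁶)`, and the same recursion computes them. Their coefficients are averages of
`1 / (n + a / b) ^ p`, evaluated by the Euler–Maclaurin formula, and the sums `∑ 1 / n ^ p`
over `n < b`, `n ≠ d`, which supply the zeta values.
-/

open Finset
open scoped unitInterval

namespace Irwin

section Digits

variable {b d : ℕ}

lemma count_digits_add_pow_mul (hd : d ≠ 0) {a l r : ℕ} (hab : a < b) (hr : r < b ^ l) :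
    (Nat.digits b (r + b ^ l * a)).count d =
      (Nat.digits b r).count d + if a = d then 1 else 0 := by
  rcases Nat.eq_zero_or_pos a with rfl | ha
  · simp [hd.symm]
  · have hb : 1 < b := by omega
    have hlen : (Nat.digits b r).length ≤ l := (Nat.digits_length_le_iff hb r).2 hr
    have happend := Nat.digits_append_zeroes_append_digits (k := l - (Nat.digits b r).length)
      (n := r) hb ha
    rw [Nat.add_sub_cancel' hlen] at happend
    rw [← happend, Nat.digits_of_lt b a ha.ne' hab]
    simp [List.count_replicate, List.count_singleton, hd.symm]

lemma sum_range_mul {M : Type*} [AddCommMonoid M] (g : ℕ → M) (m n : ℕ) :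
    ∑ i ∈ range (m * n), g i = ∑ a ∈ range n, ∑ r ∈ range m, g (r + m * a) := by
  induction n with
  | zero => simp
  | succ n ih =>
    rw [Nat.mul_succ, sum_range_add, ih, sum_range_succ]
    simp only [add_comm]

/-- The nonnegative integers below `b ^ l` whose base-`b` digits contain `d` exactly `k` times.
For `d ≠ 0` padding with leading zeros does not change the count, so these are the words of
length `l`. -/
def digitLevel (b d k l : ℕ) : Finset ℕ :=
  {r ∈ range (b ^ l) | (Nat.digits b r).count d = k}

lemma sum_digitLevel_zero_succ {M : Type*} [AddCommMonoid M] (hd : d ≠ 0) (hdb : d < b)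
    (l : ℕ) (g : ℕ → M) :
    ∑ m ∈ digitLevel b d 0 (l + 1), g m =
      ∑ a ∈ (range b).erase d, ∑ r ∈ digitLevel b d 0 l, g (r + b ^ l * a) := by
  simp only [digitLevel, sum_filter]
  rw [pow_succ, sum_range_mul, ← sum_erase _ (a := d)]
  · refine sum_congr rfl fun a ha ↦ sum_congr rfl fun r hr ↦ ?_
    rw [count_digits_add_pow_mul hd (mem_range.1 (mem_of_mem_erase ha)) (mem_range.1 hr),
      if_neg (ne_of_mem_erase ha), add_zero]
  · refine sum_eq_zero fun r hr ↦ if_neg ?_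
    simp [count_digits_add_pow_mul hd hdb (mem_range.1 hr)]

lemma sum_digitLevel_succ_succ {M : Type*} [AddCommMonoid M] (hd : d ≠ 0) (hdb : d < b)
    (k l : ℕ) (g : ℕ → M) :
    ∑ m ∈ digitLevel b d (k + 1) (l + 1), g m =
      ∑ a ∈ (range b).erase d, ∑ r ∈ digitLevel b d (k + 1) l, g (r + b ^ l * a) +
        ∑ r ∈ digitLevel b d k l, g (r + b ^ l * d) := by
  simp only [digitLevel, sum_filter]
  rw [pow_succ, sum_range_mul, ← sum_erase_add _ _ (mem_range.2 hdb)]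
  congr 1
  · refine sum_congr rfl fun a ha ↦ sum_congr rfl fun r hr ↦ ?_
    rw [count_digits_add_pow_mul hd (mem_range.1 (mem_of_mem_erase ha)) (mem_range.1 hr),
      if_neg (ne_of_mem_erase ha), add_zero]
  · refine sum_congr rfl fun r hr ↦ ?_
    simp [count_digits_add_pow_mul hd hdb (mem_range.1 hr)]

end Digits

section LevelSum

/-- The pullback of `f` along the inverse branch `x ↦ (a + x) / b` of multiplication by `b`
that prepends the digit `a` to the base-`b` expansion of `x`. -/
noncomputable def branch (b a : ℕ) (f : ℝ → ℝ) (x : ℝ) : ℝ := f ((a + x) / b)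

/-- The transfer operator that averages `f` over the branches of all digits other than `d`,
with weight `1 / b` each. -/
noncomputable def transfer (b d : ℕ) (f : ℝ → ℝ) (x : ℝ) : ℝ :=
  (∑ a ∈ (range b).erase d, branch b a f x) / b

/-- The contribution to `irwinIntegral` of the `b`-adic rationals with `l` fractional digits,
exactly `k` of them equal to `d`, each with mass `b ^ (-l)`. -/
noncomputable def levelSum (b d k l : ℕ) (f : ℝ → ℝ) : ℝ :=
  ∑ r ∈ digitLevel b d k l, f (r / b ^ l) / b ^ l

variable {b d : ℕ}

lemma add_pow_mul_div (hb : b ≠ 0) (a l r : ℕ) :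
    ((r + b ^ l * a : ℕ) : ℝ) / b ^ (l + 1) = (a + r / b ^ l) / b := by
  have : (b : ℝ) ≠ 0 := by exact_mod_cast hb
  push_cast
  field_simp
  ring

lemma levelSum_zero_zero (b d : ℕ) (f : ℝ → ℝ) : levelSum b d 0 0 f = f 0 := by
  simp [levelSum, digitLevel, sum_filter]

lemma levelSum_succ_zero (b d k : ℕ) (f : ℝ → ℝ) : levelSum b d (k + 1) 0 f = 0 := by
  simp [levelSum, digitLevel, sum_filter]

lemma sum_branch_erase (hb : b ≠ 0) (k l : ℕ) (f : ℝ → ℝ) :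
    ∑ a ∈ (range b).erase d, ∑ r ∈ digitLevel b d k l,
        f ((r + b ^ l * a : ℕ) / b ^ (l + 1)) / b ^ (l + 1) =
      levelSum b d k l (transfer b d f) := by
  rw [sum_comm, levelSum]
  refine sum_congr rfl fun r _ ↦ ?_
  simp only [add_pow_mul_div hb, transfer, branch, sum_div, div_div]
  simp only [pow_succ, mul_comm]

lemma levelSum_zero_succ (hd : d ≠ 0) (hdb : d < b) (l : ℕ) (f : ℝ → ℝ) :
    levelSum b d 0 (l + 1) f = levelSum b d 0 l (transfer b d f) := by
  rw [← sum_branch_erase (by omega), levelSum, sum_digitLevel_zero_succ hd hdb]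

lemma levelSum_succ_succ (hd : d ≠ 0) (hdb : d < b) (k l : ℕ) (f : ℝ → ℝ) :
    levelSum b d (k + 1) (l + 1) f =
      levelSum b d (k + 1) l (transfer b d f) + levelSum b d k l (branch b d f) / b := by
  rw [← sum_branch_erase (by omega), levelSum, sum_digitLevel_succ_succ hd hdb]
  simp only [add_pow_mul_div (show b ≠ 0 by omega), levelSum, branch, sum_div, div_div]
  simp only [pow_succ]

lemma levelSum_add (b d k l : ℕ) (f g : ℝ → ℝ) :
    levelSum b d k l (fun x ↦ f x + g x) = levelSum b d k l f + levelSum b d k l g := by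
  simp only [levelSum, add_div, sum_add_distrib]

lemma levelSum_const_mul (b d k l : ℕ) (c : ℝ) (f : ℝ → ℝ) :
    levelSum b d k l (fun x ↦ c * f x) = c * levelSum b d k l f := by
  simp only [levelSum, mul_div_assoc, mul_sum]

lemma levelSum_one_nonneg (b d k l : ℕ) : 0 ≤ levelSum b d k l 1 :=
  sum_nonneg fun _ _ ↦ by simp only [Pi.one_apply]; positivity

lemma abs_levelSum_le {f : ℝ → ℝ} {M : ℝ} (hf : ∀ x ∈ I, |f x| ≤ M) (b d k l : ℕ) :
    |levelSum b d k l f| ≤ M * levelSum b d k l 1 := by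
  simp only [levelSum, mul_sum]
  refine (abs_sum_le_sum_abs _ _).trans (sum_le_sum fun r hr ↦ ?_)
  have hr : r < b ^ l := mem_range.1 (mem_of_mem_filter r hr)
  have hmem : (r / b ^ l : ℝ) ∈ I :=
    ⟨by positivity, div_le_one_of_le₀ (by exact_mod_cast hr.le) (by positivity)⟩
  rw [abs_div, abs_of_nonneg (by positivity : (0 : ℝ) ≤ b ^ l), Pi.one_apply, mul_one_div]
  gcongr
  exact hf _ hmem

lemma branch_one (b a : ℕ) : branch b a 1 = 1 := rfl

lemma transfer_one (hdb : d < b) : transfer b d 1 = fun _ ↦ 1 - 1 / (b : ℝ) := by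
  have hb : (b : ℝ) ≠ 0 := by exact_mod_cast (by omega : b ≠ 0)
  funext x
  simp only [transfer, branch_one, Pi.one_apply, sum_const, nsmul_eq_mul, mul_one,
    card_erase_of_mem (mem_range.2 hdb), card_range, Nat.cast_pred (Nat.zero_lt_of_lt hdb)]
  field_simp

lemma levelSum_transfer_one (hdb : d < b) (k l : ℕ) :
    levelSum b d k l (transfer b d 1) = (1 - 1 / (b : ℝ)) * levelSum b d k l 1 := by
  rw [transfer_one hdb, ← levelSum_const_mul]
  simp

lemma summable_of_succ_le_mul_add {a c : ℕ → ℝ} {r : ℝ} (hr : r < 1)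
    (ha : ∀ n, 0 ≤ a n) (hc : ∀ n, 0 ≤ c n) (hcs : Summable c)
    (h : ∀ n, a (n + 1) ≤ r * a n + c n) : Summable a := by
  refine summable_of_sum_range_le (c := (a 0 + ∑' n, c n) / (1 - r)) ha fun n ↦ ?_
  rw [le_div_iff₀ (by linarith)]
  have hstep : ∑ i ∈ range n, a (i + 1) ≤ r * ∑ i ∈ range n, a i + ∑ i ∈ range n, c i := by
    rw [mul_sum, ← sum_add_distrib]
    exact sum_le_sum fun i _ ↦ h i
  have hsucc := (sum_range_succ a n).symm.trans (sum_range_succ' a n)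
  linarith [hcs.sum_le_tsum (range n) fun i _ ↦ hc i, ha n]

lemma summable_levelSum_one (hd : d ≠ 0) (hdb : d < b) (k : ℕ) :
    Summable fun l ↦ levelSum b d k l 1 := by
  have hb : (0 : ℝ) < b := by exact_mod_cast Nat.zero_lt_of_lt hdb
  have hr : 1 - 1 / (b : ℝ) < 1 := sub_lt_self _ (by positivity)
  induction k with
  | zero =>
    refine summable_of_succ_le_mul_add hr (levelSum_one_nonneg b d 0) (c := 0)
      (fun _ ↦ le_rfl) summable_zero fun l ↦ ?_
    rw [levelSum_zero_succ hd hdb, levelSum_transfer_one hdb, Pi.zero_apply, add_zero]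
  | succ k ih =>
    refine summable_of_succ_le_mul_add hr (levelSum_one_nonneg b d (k + 1))
      (fun l ↦ div_nonneg (levelSum_one_nonneg b d k l) b.cast_nonneg) (ih.div_const _)
      fun l ↦ ?_
    rw [levelSum_succ_succ hd hdb, levelSum_transfer_one hdb, branch_one]

lemma summable_levelSum (hd : d ≠ 0) (hdb : d < b) (k : ℕ) {f : ℝ → ℝ} {M : ℝ}
    (hf : ∀ x ∈ I, |f x| ≤ M) : Summable fun l ↦ levelSum b d k l f :=
  .of_norm_bounded ((summable_levelSum_one hd hdb k).mul_left M) (abs_levelSum_le hf b d k)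

end LevelSum

section Integral

variable {b d : ℕ} {f g : ℝ → ℝ} {M N : ℝ}

/-- The integral of `f` against the discrete measure on `[0, 1)` which gives mass `b ^ (-l)` to
each string of `l ≥ 0` base-`b` digits, exactly `k` of them equal to `d`, placed at the number
whose fractional digits it is. -/
noncomputable def irwinIntegral (b d k : ℕ) (f : ℝ → ℝ) : ℝ := ∑' l, levelSum b d k l f

lemma add_div_mem_unitInterval {a : ℕ} (hab : a < b) {x : ℝ} (hx : x ∈ I) :
    (a + x) / b ∈ I := by
  have hab : (a : ℝ) + 1 ≤ b := by exact_mod_cast hab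
  have hx0 := hx.1
  exact ⟨by positivity, div_le_one_of_le₀ (by linarith [hx.2]) (by positivity)⟩

lemma abs_branch_le {a : ℕ} (hab : a < b) (hf : ∀ x ∈ I, |f x| ≤ M) :
    ∀ x ∈ I, |branch b a f x| ≤ M :=
  fun _ hx ↦ hf _ (add_div_mem_unitInterval hab hx)

lemma abs_transfer_le (hf : ∀ x ∈ I, |f x| ≤ M) : ∀ x ∈ I, |transfer b d f x| ≤ M := by
  intro x hx
  have hM : 0 ≤ M := (abs_nonneg _).trans (hf 0 ⟨le_rfl, zero_le_one⟩)
  rw [transfer, abs_div, Nat.abs_cast]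
  refine div_le_of_le_mul₀ b.cast_nonneg hM ((abs_sum_le_sum_abs _ _).trans ?_)
  refine (sum_le_sum_of_subset_of_nonneg (erase_subset d _) fun _ _ _ ↦ abs_nonneg _).trans ?_
  refine (sum_le_card_nsmul _ _ M fun a ha ↦ abs_branch_le (mem_range.1 ha) hf x hx).trans_eq ?_
  rw [card_range, nsmul_eq_mul, mul_comm]

lemma irwinIntegral_add (hd : d ≠ 0) (hdb : d < b) (k : ℕ) (hf : ∀ x ∈ I, |f x| ≤ M)
    (hg : ∀ x ∈ I, |g x| ≤ N) :
    irwinIntegral b d k (fun x ↦ f x + g x) = irwinIntegral b d k f + irwinIntegral b d k g := by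
  simp only [irwinIntegral, levelSum_add]
  exact (summable_levelSum hd hdb k hf).tsum_add (summable_levelSum hd hdb k hg)

lemma irwinIntegral_const_mul (b d k : ℕ) (c : ℝ) (f : ℝ → ℝ) :
    irwinIntegral b d k (fun x ↦ c * f x) = c * irwinIntegral b d k f := by
  simp only [irwinIntegral, levelSum_const_mul, tsum_mul_left]

lemma irwinIntegral_zero_eq (hd : d ≠ 0) (hdb : d < b) (hf : ∀ x ∈ I, |f x| ≤ M) :
    irwinIntegral b d 0 f = f 0 + irwinIntegral b d 0 (transfer b d f) := by
  rw [irwinIntegral, (summable_levelSum hd hdb 0 hf).tsum_eq_zero_add, levelSum_zero_zero]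
  simp only [levelSum_zero_succ hd hdb, irwinIntegral]

lemma irwinIntegral_succ_eq (hd : d ≠ 0) (hdb : d < b) (k : ℕ) (hf : ∀ x ∈ I, |f x| ≤ M) :
    irwinIntegral b d (k + 1) f =
      irwinIntegral b d (k + 1) (transfer b d f) + irwinIntegral b d k (branch b d f) / b := by
  rw [irwinIntegral, (summable_levelSum hd hdb _ hf).tsum_eq_zero_add, levelSum_succ_zero,
    zero_add]
  simp only [levelSum_succ_succ hd hdb, irwinIntegral]
  rw [(summable_levelSum hd hdb _ (abs_transfer_le hf)).tsum_add
    ((summable_levelSum hd hdb _ (abs_branch_le hdb hf)).div_const _), tsum_div_const]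

lemma irwinIntegral_transfer_one (hdb : d < b) (k : ℕ) :
    irwinIntegral b d k (transfer b d 1) = (1 - 1 / (b : ℝ)) * irwinIntegral b d k 1 := by
  simp only [irwinIntegral, levelSum_transfer_one hdb, tsum_mul_left]

lemma irwinIntegral_one (hd : d ≠ 0) (hdb : d < b) (k : ℕ) : irwinIntegral b d k 1 = b := by
  have hb : (b : ℝ) ≠ 0 := by exact_mod_cast (by omega : b ≠ 0)
  have hone : ∀ x ∈ I, |(1 : ℝ → ℝ) x| ≤ 1 := by simp
  induction k with
  | zero =>
    have h := irwinIntegral_zero_eq hd hdb hone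
    rw [irwinIntegral_transfer_one hdb, Pi.one_apply] at h
    field_simp at h
    linarith
  | succ k ih =>
    have h := irwinIntegral_succ_eq hd hdb k hone
    rw [irwinIntegral_transfer_one hdb, branch_one, ih] at h
    field_simp at h
    linarith

lemma abs_irwinIntegral_le (hd : d ≠ 0) (hdb : d < b) (k : ℕ) (hf : ∀ x ∈ I, |f x| ≤ M) :
    |irwinIntegral b d k f| ≤ b * M := by
  rw [← irwinIntegral_one hd hdb k, mul_comm]
  exact tsum_of_norm_bounded (f := fun l ↦ levelSum b d k l f)
    ((summable_levelSum_one hd hdb k).hasSum.mul_left M) (abs_levelSum_le hf b d k)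

end Integral

section Series

variable {b d : ℕ}

/-- The nonzero digits in base `b` other than `d`. -/
def otherDigits (b d : ℕ) : Finset ℕ := (Ico 1 b).erase d

lemma sum_digitLevel_one_div (hd : d ≠ 0) (hdb : d < b) (k L : ℕ) :
    ∑ m ∈ digitLevel b d (k + 1) L, 1 / (m : ℝ) =
      ∑ l ∈ range L, (levelSum b d (k + 1) l (fun x ↦ ∑ n ∈ otherDigits b d, 1 / (n + x)) +
        levelSum b d k l fun x ↦ 1 / (d + x)) := by
  have hleading (a l r : ℕ) : 1 / ((r + b ^ l * a : ℕ) : ℝ) = 1 / (a + r / b ^ l) / b ^ l := by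
    have hb : (b : ℝ) ^ l ≠ 0 := by exact_mod_cast (by positivity [show 0 < b by omega])
    rw [div_div, add_mul, div_mul_cancel₀ _ hb]
    push_cast
    ring_nf
  induction L with
  | zero => simp [digitLevel, sum_filter]
  | succ L ih =>
    have hzero : 0 ∈ (range b).erase d :=
      mem_erase.2 ⟨hd.symm, mem_range.2 (Nat.zero_lt_of_lt hdb)⟩
    have hother : ((range b).erase d).erase 0 = otherDigits b d := by
      ext
      simp only [otherDigits, mem_erase, mem_range, mem_Ico]
      omega
    rw [sum_digitLevel_succ_succ hd hdb, sum_range_succ, ← ih, ← add_sum_erase _ _ hzero, hother,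
      sum_comm (s := otherDigits b d)]
    simp only [mul_zero, add_zero, hleading, levelSum, sum_div, add_assoc]

lemma abs_one_div_add_le {n : ℕ} (hn : n ≠ 0) : ∀ x ∈ I, |1 / ((n : ℝ) + x)| ≤ 1 := by
  intro x hx
  have hn : (1 : ℝ) ≤ n := by exact_mod_cast Nat.one_le_iff_ne_zero.2 hn
  rw [abs_of_nonneg (div_nonneg zero_le_one (by linarith [hx.1]))]
  exact div_le_one_of_le₀ (by linarith [hx.1]) (by linarith [hx.1])

lemma ne_zero_of_mem_otherDigits {n : ℕ} (hn : n ∈ otherDigits b d) : n ≠ 0 := by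
  have := (mem_Ico.1 (mem_of_mem_erase hn)).1
  omega

lemma abs_sum_one_div_add_le (b d : ℕ) :
    ∀ x ∈ I, |∑ n ∈ otherDigits b d, 1 / ((n : ℝ) + x)| ≤ #(otherDigits b d) := by
  intro x hx
  refine (abs_sum_le_sum_abs _ _).trans ((sum_le_card_nsmul _ _ 1 fun n hn ↦ ?_).trans_eq ?_)
  · exact abs_one_div_add_le (ne_zero_of_mem_otherDigits hn) x hx
  · rw [nsmul_eq_mul, mul_one]

theorem irwinSum_succ_eq_irwinIntegral (hd : d ≠ 0) (hdb : d < b) (k : ℕ) :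
    irwinSum b d (k + 1) =
      irwinIntegral b d (k + 1) (fun x ↦ ∑ n ∈ otherDigits b d, 1 / (n + x)) +
        irwinIntegral b d k fun x ↦ 1 / (d + x) := by
  set term : ℕ → ℝ := fun m ↦
    if 0 < m ∧ (Nat.digits b m).count d = k + 1 then (1 : ℝ) / m else 0
  have hnonneg (m : ℕ) : 0 ≤ term m := by dsimp only [term]; positivity
  have hmono : Monotone fun n ↦ ∑ m ∈ range n, term m := fun _ _ hmn ↦
    sum_le_sum_of_subset_of_nonneg (range_subset_range.2 hmn) fun m _ _ ↦ hnonneg m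
  have hlevel (L : ℕ) :
      ∑ m ∈ range (b ^ L), term m = ∑ m ∈ digitLevel b d (k + 1) L, 1 / (m : ℝ) := by
    rw [digitLevel, sum_filter]
    refine sum_congr rfl fun m _ ↦ ?_
    rcases Nat.eq_zero_or_pos m with rfl | hm <;> simp [term, *]
  have hlim := ((summable_levelSum hd hdb (k + 1) (abs_sum_one_div_add_le b d)).hasSum.add
    (summable_levelSum hd hdb k (abs_one_div_add_le hd)).hasSum).tendsto_sum_nat
  simp only [← sum_digitLevel_one_div hd hdb, ← hlevel] at hlim
  have hpow : Tendsto (fun L : ℕ ↦ b ^ L) atTop atTop :=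
    tendsto_pow_atTop_atTop_of_one_lt (by omega)
  exact ((hasSum_iff_tendsto_nat_of_nonneg hnonneg _).2
    ((tendsto_iff_tendsto_subseq_of_monotone hmono hpow).2 hlim)).tsum_eq

end Series

section Lipschitz

/-- `f` is Lipschitz on the unit interval with constant `L`. The constant is real, unlike in
`LipschitzOnWith`, because the constants occurring here are explicit real expressions. -/
def LipschitzOnUnit (L : ℝ) (f : ℝ → ℝ) : Prop :=
  ∀ x ∈ I, ∀ y ∈ I, |f x - f y| ≤ L * |x - y|

variable {L L' : ℝ} {f g : ℝ → ℝ}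

namespace LipschitzOnUnit

lemma nonneg (hf : LipschitzOnUnit L f) : 0 ≤ L := by
  simpa using (abs_nonneg _).trans (hf 1 ⟨zero_le_one, le_rfl⟩ 0 ⟨le_rfl, zero_le_one⟩)

lemma mono (hf : LipschitzOnUnit L f) (h : L ≤ L') : LipschitzOnUnit L' f := fun x hx y hy ↦
  (hf x hx y hy).trans (by gcongr)

lemma abs_sub_zero_le (hf : LipschitzOnUnit L f) {x : ℝ} (hx : x ∈ I) : |f x - f 0| ≤ L * x := by
  simpa [abs_of_nonneg hx.1] using hf x hx 0 ⟨le_rfl, zero_le_one⟩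

lemma abs_le_abs_zero_add (hf : LipschitzOnUnit L f) : ∀ x ∈ I, |f x| ≤ |f 0| + L := by
  intro x hx
  have hL : L * x ≤ L := mul_le_of_le_one_right hf.nonneg hx.2
  linarith [hf.abs_sub_zero_le hx, abs_sub_abs_le_abs_sub (f x) (f 0)]

lemma const (c : ℝ) : LipschitzOnUnit 0 fun _ ↦ c := fun _ _ _ _ ↦ by simp

lemma add (hf : LipschitzOnUnit L f) (hg : LipschitzOnUnit L' g) :
    LipschitzOnUnit (L + L') fun x ↦ f x + g x := fun x hx y hy ↦ by
  rw [add_sub_add_comm, add_mul]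
  exact (abs_add_le _ _).trans (add_le_add (hf x hx y hy) (hg x hx y hy))

lemma const_mul (hf : LipschitzOnUnit L f) (c : ℝ) :
    LipschitzOnUnit (|c| * L) fun x ↦ c * f x := fun x hx y hy ↦ by
  rw [← mul_sub, abs_mul, mul_assoc]
  exact mul_le_mul_of_nonneg_left (hf x hx y hy) (abs_nonneg c)

lemma sum {ι : Type*} {s : Finset ι} {L : ι → ℝ} {f : ι → ℝ → ℝ}
    (hf : ∀ i ∈ s, LipschitzOnUnit (L i) (f i)) :
    LipschitzOnUnit (∑ i ∈ s, L i) fun x ↦ ∑ i ∈ s, f i x := fun x hx y hy ↦ by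
  rw [← sum_sub_distrib, sum_mul]
  exact (abs_sum_le_sum_abs _ _).trans (sum_le_sum fun i hi ↦ hf i hi x hx y hy)

lemma add_pow {e : ℝ} (he : 0 ≤ e) (j : ℕ) :
    LipschitzOnUnit (j * (e + 1) ^ (j - 1)) fun x ↦ (e + x) ^ j := fun x hx y hy ↦ by
  have hbound {x : ℝ} (hx : x ∈ I) : |e + x| ≤ e + 1 := by
    rw [abs_of_nonneg (add_nonneg he hx.1)]
    gcongr
    exact hx.2
  calc |(e + x) ^ j - (e + y) ^ j|
      ≤ |e + x - (e + y)| * j * max |e + x| |e + y| ^ (j - 1) := abs_pow_sub_pow_le ..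
    _ ≤ |x - y| * j * (e + 1) ^ (j - 1) := by
        rw [add_sub_add_left_eq_sub]
        gcongr
        exact max_le (hbound hx) (hbound hy)
    _ = j * (e + 1) ^ (j - 1) * |x - y| := by ring

lemma pow (j : ℕ) : LipschitzOnUnit j fun x ↦ x ^ j := by
  simpa using add_pow le_rfl j

lemma continuousOn (hf : LipschitzOnUnit L f) : ContinuousOn f I := by
  refine (LipschitzOnWith.of_dist_le_mul (K := L.toNNReal) fun x hx y hy ↦ ?_).continuousOn
  rw [Real.dist_eq, Real.dist_eq, Real.coe_toNNReal _ hf.nonneg]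
  exact hf x hx y hy

lemma intervalIntegrable (hf : LipschitzOnUnit L f) :
    IntervalIntegrable f MeasureTheory.volume 0 1 :=
  hf.continuousOn.intervalIntegrable_of_Icc zero_le_one

variable {b d : ℕ}

lemma branch {a : ℕ} (hab : a < b) (hf : LipschitzOnUnit L f) :
    LipschitzOnUnit (L / b) (branch b a f) := fun x hx y hy ↦ by
  refine (hf _ (add_div_mem_unitInterval hab hx) _ (add_div_mem_unitInterval hab hy)).trans_eq ?_
  rw [← sub_div, add_sub_add_left_eq_sub, abs_div, Nat.abs_cast]
  ring

lemma transfer (hf : LipschitzOnUnit L f) : LipschitzOnUnit (L / b) (transfer b d f) := by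
  have hsum := (sum (s := (range b).erase d)
    fun a ha ↦ hf.branch (mem_range.1 (mem_of_mem_erase ha))).const_mul (1 / b)
  have hcard : (#((range b).erase d) : ℝ) ≤ b := by
    exact_mod_cast (card_erase_le).trans_eq (card_range b)
  refine fun x hx y hy ↦ ?_
  have h := (hsum.mono (L' := L / b) ?_) x hx y hy
  · simpa only [Irwin.transfer, div_eq_inv_mul, mul_one] using h
  · rw [sum_const, nsmul_eq_mul, abs_of_nonneg (by positivity), one_div_mul_eq_div]
    have hL := div_nonneg hf.nonneg b.cast_nonneg
    refine div_le_of_le_mul₀ b.cast_nonneg hL ?_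
    rw [mul_comm (L / (b : ℝ))]
    exact mul_le_mul_of_nonneg_right hcard hL

end LipschitzOnUnit

end Lipschitz

section Discrepancy

variable {b d : ℕ} {L L' : ℝ} {f g : ℝ → ℝ}

/-- The difference between the integrals of `f` against the discrete measure of `irwinIntegral`
and against `b` times Lebesgue measure on `[0, 1]`. -/
noncomputable def irwinDiscrepancy (b d k : ℕ) (f : ℝ → ℝ) : ℝ :=
  irwinIntegral b d k f - b * ∫ x in 0..1, f x

lemma irwinDiscrepancy_const_mul (b d k : ℕ) (c : ℝ) (f : ℝ → ℝ) :
    irwinDiscrepancy b d k (fun x ↦ c * f x) = c * irwinDiscrepancy b d k f := by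
  rw [irwinDiscrepancy, irwinDiscrepancy, irwinIntegral_const_mul,
    intervalIntegral.integral_const_mul]
  ring

lemma irwinDiscrepancy_add (hd : d ≠ 0) (hdb : d < b) (k : ℕ) (hf : LipschitzOnUnit L f)
    (hg : LipschitzOnUnit L' g) :
    irwinDiscrepancy b d k (fun x ↦ f x + g x) =
      irwinDiscrepancy b d k f + irwinDiscrepancy b d k g := by
  simp only [irwinDiscrepancy]
  rw [irwinIntegral_add hd hdb k hf.abs_le_abs_zero_add hg.abs_le_abs_zero_add,
    intervalIntegral.integral_add hf.intervalIntegrable hg.intervalIntegrable]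
  ring

lemma irwinDiscrepancy_const (hd : d ≠ 0) (hdb : d < b) (k : ℕ) (c : ℝ) :
    irwinDiscrepancy b d k (fun _ ↦ c) = 0 := by
  have h := irwinIntegral_const_mul b d k c 1
  simp only [Pi.one_apply, mul_one, irwinIntegral_one hd hdb] at h
  rw [irwinDiscrepancy, h]
  simp [mul_comm]

lemma irwinDiscrepancy_sum (hd : d ≠ 0) (hdb : d < b) (k : ℕ) {ι : Type*} {s : Finset ι}
    {L : ι → ℝ} {f : ι → ℝ → ℝ} (hf : ∀ i ∈ s, LipschitzOnUnit (L i) (f i)) :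
    irwinDiscrepancy b d k (fun x ↦ ∑ i ∈ s, f i x) = ∑ i ∈ s, irwinDiscrepancy b d k (f i) := by
  classical
  induction s using Finset.induction_on with
  | empty => simpa using irwinDiscrepancy_const hd hdb k 0
  | insert i s hi ih =>
    rw [forall_mem_insert] at hf
    simp only [sum_insert hi, ← ih hf.2]
    exact irwinDiscrepancy_add hd hdb k hf.1 (.sum hf.2)

lemma integral_transfer_add_integral_branch (hdb : d < b) (hf : LipschitzOnUnit L f) :
    b * (∫ x in 0..1, transfer b d f x) + ∫ x in 0..1, branch b d f x =
      b * ∫ x in 0..1, f x := by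
  have hb : (b : ℝ) ≠ 0 := by exact_mod_cast (by omega : b ≠ 0)
  have hbranch (a : ℕ) : ∫ x in 0..1, branch b a f x =
      b * ∫ x in (a / b : ℝ)..((a + 1 : ℕ) / b : ℝ), f x := by
    have h := intervalIntegral.integral_comp_div_add (a := 0) (b := 1) f hb (a / b)
    simp only [zero_div, zero_add, smul_eq_mul, ← add_div, add_comm _ (a : ℝ)] at h
    push_cast
    exact h
  have hint : ∀ a < b, IntervalIntegrable f MeasureTheory.volume (a / b) ((a + 1 : ℕ) / b) := by
    intro a ha
    have ha' : (a : ℝ) + 1 ≤ b := by exact_mod_cast ha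
    refine (hf.continuousOn.mono (Set.Icc_subset_Icc (by positivity) ?_)).intervalIntegrable_of_Icc
      (by gcongr; omega)
    push_cast
    exact div_le_one_of_le₀ ha' (by positivity)
  have hsplit := intervalIntegral.sum_integral_adjacent_intervals hint
  rw [Nat.cast_zero, zero_div, div_self hb] at hsplit
  simp only [transfer]
  rw [intervalIntegral.integral_div, mul_div_cancel₀ _ hb, intervalIntegral.integral_finsetSum
    fun a ha ↦ (hf.branch (mem_range.1 (mem_of_mem_erase ha))).intervalIntegrable,
    sum_erase_add _ _ (mem_range.2 hdb), ← hsplit, mul_sum]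
  exact sum_congr rfl fun a _ ↦ hbranch a

lemma irwinDiscrepancy_zero_eq (hd : d ≠ 0) (hdb : d < b) (hf : LipschitzOnUnit L f) :
    irwinDiscrepancy b d 0 f =
      f 0 - (∫ x in 0..1, branch b d f x) + irwinDiscrepancy b d 0 (transfer b d f) := by
  rw [irwinDiscrepancy, irwinDiscrepancy, irwinIntegral_zero_eq hd hdb hf.abs_le_abs_zero_add,
    ← integral_transfer_add_integral_branch hdb hf]
  ring

lemma irwinDiscrepancy_succ_eq (hd : d ≠ 0) (hdb : d < b) (k : ℕ) (hf : LipschitzOnUnit L f) :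
    irwinDiscrepancy b d (k + 1) f =
      irwinDiscrepancy b d (k + 1) (transfer b d f) +
        irwinDiscrepancy b d k (branch b d f) / b := by
  have hb : (b : ℝ) ≠ 0 := by exact_mod_cast (by omega : b ≠ 0)
  simp only [irwinDiscrepancy]
  rw [irwinIntegral_succ_eq hd hdb k hf.abs_le_abs_zero_add,
    ← integral_transfer_add_integral_branch hdb hf]
  field_simp
  ring

lemma abs_integral_le_of_abs_le {M : ℝ} (hf : ∀ x ∈ I, |f x| ≤ M) : |∫ x in 0..1, f x| ≤ M := by
  simpa using intervalIntegral.norm_integral_le_of_norm_le_const (a := (0 : ℝ)) (b := 1) (C := M)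
    (f := f) fun x hx ↦ hf x (Set.Ioc_subset_Icc_self (Set.uIoc_of_le (zero_le_one' ℝ) ▸ hx))

lemma abs_irwinDiscrepancy_le_two_mul (hd : d ≠ 0) (hdb : d < b) (k : ℕ)
    (hf : LipschitzOnUnit L f) : |irwinDiscrepancy b d k f| ≤ 2 * b * L := by
  have hshift := irwinDiscrepancy_add hd hdb k hf (.const (-f 0))
  rw [irwinDiscrepancy_const hd hdb, add_zero] at hshift
  have hbound : ∀ x ∈ I, |f x + -f 0| ≤ L := fun x hx ↦
    (hf.abs_sub_zero_le hx).trans (mul_le_of_le_one_right hf.nonneg hx.2)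
  rw [← hshift, irwinDiscrepancy]
  refine (abs_sub _ _).trans ?_
  rw [abs_mul, Nat.abs_cast]
  linarith [abs_irwinIntegral_le hd hdb k hbound,
    mul_le_mul_of_nonneg_left (abs_integral_le_of_abs_le hbound) b.cast_nonneg]

lemma abs_sub_integral_branch_le (hdb : d < b) (hf : LipschitzOnUnit L f) :
    |f 0 - ∫ x in 0..1, branch b d f x| ≤ (d + 1) / b * L := by
  have hint : f 0 - ∫ x in 0..1, branch b d f x = ∫ x in 0..1, f 0 - branch b d f x := by
    rw [intervalIntegral.integral_sub (by simp) (hf.branch hdb).intervalIntegrable]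
    simp
  rw [hint]
  refine abs_integral_le_of_abs_le fun x hx ↦ ?_
  rw [abs_sub_comm, mul_comm]
  refine (hf.abs_sub_zero_le (add_div_mem_unitInterval hdb hx)).trans ?_
  have := hf.nonneg
  gcongr
  exact hx.2

/-- The bound is obtained by iterating `hN`: since `transfer b d` divides Lipschitz constants by
`b ≥ 2`, the errors form a convergent geometric series. -/
lemma abs_le_two_mul_of_abs_le_add_transfer (hb : 2 ≤ b) {N : (ℝ → ℝ) → ℝ} {K ε : ℝ} (hε : 0 ≤ ε)
    (hK : ∀ {L f}, LipschitzOnUnit L f → |N f| ≤ K * L)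
    (hN : ∀ {L f}, LipschitzOnUnit L f → |N f| ≤ ε * L + |N (transfer b d f)|)
    (hf : LipschitzOnUnit L f) : |N f| ≤ 2 * ε * L := by
  have hb : (2 : ℝ) ≤ b := by exact_mod_cast hb
  have hiterate (n : ℕ) : ∀ {L f}, LipschitzOnUnit L f →
      |N f| ≤ 2 * ε * L + K * L * (1 / b) ^ n := by
    induction n with
    | zero =>
      intro L f hf
      have := mul_nonneg (mul_nonneg zero_le_two hε) hf.nonneg
      linarith [hK hf]
    | succ n ih =>
      intro L f hf
      have hhalf : 2 * ε * (L / b) ≤ ε * L := by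
        rw [← mul_div_assoc, div_le_iff₀ (by linarith)]
        nlinarith [mul_nonneg hε hf.nonneg]
      calc |N f| ≤ ε * L + |N (transfer b d f)| := hN hf
        _ ≤ ε * L + (2 * ε * (L / b) + K * (L / b) * (1 / b) ^ n) := by
          gcongr
          exact ih hf.transfer
        _ ≤ ε * L + (ε * L + K * (L / b) * (1 / b) ^ n) := by gcongr
        _ = _ := by ring
  have hlim : Tendsto (fun n : ℕ ↦ 2 * ε * L + K * L * (1 / b : ℝ) ^ n) atTop
      (nhds (2 * ε * L + K * L * 0)) :=
    ((tendsto_pow_atTop_nhds_zero_of_lt_one (by positivity)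
      ((div_lt_one (by linarith)).2 (by linarith))).const_mul _).const_add _
  simpa using ge_of_tendsto' hlim fun n ↦ hiterate n hf

theorem abs_irwinDiscrepancy_le (hd : d ≠ 0) (hdb : d < b) (k : ℕ) (hf : LipschitzOnUnit L f) :
    |irwinDiscrepancy b d k f| ≤ 2 ^ (k + 1) * (d + 1) / b ^ (2 * k + 1) * L := by
  have hb2 : 2 ≤ b := by omega
  have hb : (0 : ℝ) < b := by positivity
  induction k generalizing L f with
  | zero =>
    refine (abs_le_two_mul_of_abs_le_add_transfer (d := d) hb2 (ε := (d + 1) / b) (by positivity)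
      (abs_irwinDiscrepancy_le_two_mul hd hdb 0) (fun hf ↦ ?_) hf).trans_eq (by ring)
    rw [irwinDiscrepancy_zero_eq hd hdb hf]
    exact (abs_add_le _ _).trans (by gcongr; exact abs_sub_integral_branch_le hdb hf)
  | succ k ih =>
    refine (abs_le_two_mul_of_abs_le_add_transfer (d := d) hb2
      (ε := 2 ^ (k + 1) * (d + 1) / b ^ (2 * k + 3)) (by positivity)
      (abs_irwinDiscrepancy_le_two_mul hd hdb (k + 1)) (fun hf ↦ ?_) hf).trans_eq (by ring)
    rw [irwinDiscrepancy_succ_eq hd hdb k hf, add_comm]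
    refine (abs_add_le _ _).trans (add_le_add_left ?_ _)
    rw [abs_div, Nat.abs_cast, div_le_iff₀ hb]
    exact (ih (hf.branch hdb)).trans_eq (by field_simp; ring)

end Discrepancy

section MainTerm

variable {b d n : ℕ}

lemma LipschitzOnUnit.one_div_add {u : ℝ} (hu : 0 < u) :
    LipschitzOnUnit (1 / u ^ 2) fun x ↦ 1 / (u + x) := fun x hx y hy ↦ by
  have hux : 0 < u + x := by linarith [hx.1]
  have huy : 0 < u + y := by linarith [hy.1]
  rw [div_sub_div _ _ hux.ne' huy.ne', abs_div, abs_of_pos (mul_pos hux huy), one_mul, mul_one,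
    add_sub_add_left_eq_sub, abs_sub_comm, ← one_div_mul_eq_div]
  gcongr
  nlinarith [mul_nonneg hx.1 hy.1, mul_nonneg hu.le hx.1, mul_nonneg hu.le hy.1]

lemma lipschitzOnUnit_one_div_add (hn : n ≠ 0) :
    LipschitzOnUnit (1 / (n : ℝ) ^ 2) fun x ↦ 1 / (n + x) :=
  .one_div_add (by positivity)

lemma lipschitzOnUnit_sum_one_div_add (b d : ℕ) :
    LipschitzOnUnit (∑ n ∈ otherDigits b d, 1 / (n : ℝ) ^ 2) fun x ↦
      ∑ n ∈ otherDigits b d, 1 / (n + x) :=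
  .sum fun _ hn ↦ lipschitzOnUnit_one_div_add (ne_zero_of_mem_otherDigits hn)

lemma integral_one_div_natCast_add (hn : n ≠ 0) :
    ∫ x in (0 : ℝ)..1, 1 / (n + x) = Real.log (n + 1) - Real.log n := by
  rw [intervalIntegral.integral_comp_add_left (fun x : ℝ ↦ 1 / x) (n : ℝ), add_zero,
    integral_one_div_of_pos (by positivity) (by positivity),
    Real.log_div (by positivity) (by positivity)]

lemma sum_otherDigits_add (hd : d ≠ 0) (hdb : d < b) (g : ℕ → ℝ) :
    ∑ n ∈ otherDigits b d, g n + g d = ∑ n ∈ Ico 1 b, g n :=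
  sum_erase_add _ _ (mem_Ico.2 ⟨Nat.one_le_iff_ne_zero.2 hd, hdb⟩)

lemma integral_sum_one_div_add_add_integral (hd : d ≠ 0) (hdb : d < b) :
    (∫ x in (0 : ℝ)..1, ∑ n ∈ otherDigits b d, 1 / (n + x)) + ∫ x in (0 : ℝ)..1, 1 / (d + x) =
      Real.log b := by
  rw [intervalIntegral.integral_finsetSum fun n hn ↦ (lipschitzOnUnit_one_div_add
      (ne_zero_of_mem_otherDigits hn)).intervalIntegrable,
    sum_otherDigits_add hd hdb fun n : ℕ ↦ ∫ x in (0 : ℝ)..1, 1 / (n + x),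
    sum_congr rfl fun n hn ↦ integral_one_div_natCast_add (by grind : n ≠ 0)]
  have htelescope := sum_Ico_sub (fun n : ℕ ↦ Real.log n) (show 1 ≤ b by omega)
  simpa using htelescope

theorem irwinSum_succ_eq (hd : d ≠ 0) (hdb : d < b) (k : ℕ) :
    irwinSum b d (k + 1) = b * Real.log b +
      irwinDiscrepancy b d (k + 1) (fun x ↦ ∑ n ∈ otherDigits b d, 1 / (n + x)) +
      irwinDiscrepancy b d k fun x ↦ 1 / (d + x) := by
  rw [irwinSum_succ_eq_irwinIntegral hd hdb, irwinDiscrepancy, irwinDiscrepancy,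
    ← integral_sum_one_div_add_add_integral hd hdb]
  ring

end MainTerm

/-- `X b = O(b⁻ᵏ)` as `b → ∞`. Powers of `b⁻¹` are used because truncated expansions
are then polynomials in `b⁻¹` and the coefficients of a product are read off without division. -/
def IsBigOInvPow (k : ℕ) (X : ℕ → ℝ) : Prop :=
  X =O[atTop] fun b : ℕ ↦ (b : ℝ)⁻¹ ^ k

namespace IsBigOInvPow

variable {d i j k : ℕ} {X Y : ℕ → ℝ}

lemma of_abs_le {C : ℝ} (h : ∀ b > d, |X b| ≤ C * (b : ℝ)⁻¹ ^ k) : IsBigOInvPow k X :=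
  .of_bound C <| (eventually_gt_atTop d).mono fun b hb ↦ by
    rw [Real.norm_of_nonneg (r := (b : ℝ)⁻¹ ^ k) (by positivity)]
    exact h b hb

lemma congr (hX : IsBigOInvPow k X) (h : ∀ b > d, Y b = X b) : IsBigOInvPow k Y :=
  hX.congr' ((eventually_gt_atTop d).mono fun b hb ↦ (h b hb).symm) .rfl

lemma mono (hX : IsBigOInvPow j X) (hkj : k ≤ j) : IsBigOInvPow k X :=
  hX.trans <| .of_bound' <| (eventually_ge_atTop 1).mono fun b hb ↦ by
    have hb : (1 : ℝ) ≤ b := by exact_mod_cast hb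
    rw [Real.norm_of_nonneg (by positivity), Real.norm_of_nonneg (by positivity)]
    exact pow_le_pow_of_le_one (by positivity) (inv_le_one_of_one_le₀ hb) hkj

lemma add (hX : IsBigOInvPow k X) (hY : IsBigOInvPow k Y) : IsBigOInvPow k fun b ↦ X b + Y b :=
  IsBigO.add hX hY

lemma mul (hX : IsBigOInvPow i X) (hY : IsBigOInvPow j Y) (hk : k ≤ i + j := by norm_num) :
    IsBigOInvPow k fun b ↦ X b * Y b :=
  mono (by simpa only [IsBigOInvPow, pow_add] using IsBigO.mul hX hY) hk

lemma inv_pow_mul (k : ℕ) (g : ℝ → ℝ) (hg : ContinuousAt g 0 := by fun_prop) :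
    IsBigOInvPow k fun b ↦ (b : ℝ)⁻¹ ^ k * g (b : ℝ)⁻¹ := by
  have hone : IsBigOInvPow 0 fun b ↦ g (b : ℝ)⁻¹ := by
    simp only [IsBigOInvPow, pow_zero]
    exact (hg.tendsto.comp tendsto_inv_atTop_nhds_zero_nat).isBigO_one ℝ
  exact mul (isBigO_refl _ _) hone

end IsBigOInvPow

section Moment

variable {b d : ℕ}

/-- The `j`-th moment of the signed measure against which `irwinDiscrepancy` integrates. -/
noncomputable def moment (b d k j : ℕ) : ℝ := irwinDiscrepancy b d k fun x ↦ x ^ j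

/-- The power sum of exponent `p` over the base-`b` digits other than `d`. -/
def digitPowerSum (b d p : ℕ) : ℝ := ∑ a ∈ (range b).erase d, (a : ℝ) ^ p

lemma digitPowerSum_eq (hdb : d < b) (p : ℕ) :
    digitPowerSum b d p = ∑ a ∈ range b, (a : ℝ) ^ p - d ^ p := by
  rw [digitPowerSum, sum_erase_eq_sub (mem_range.2 hdb)]

lemma digitPowerSum_zero (hdb : d < b) : digitPowerSum b d 0 = b - 1 := by
  simp [digitPowerSum_eq hdb]

lemma digitPowerSum_one (hdb : d < b) : digitPowerSum b d 1 = b * (b - 1) / 2 - d := by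
  have h : ∀ n : ℕ, ∑ a ∈ range n, (a : ℝ) = n * (n - 1) / 2 := fun n ↦ by
    induction n with
    | zero => simp
    | succ n ih => rw [sum_range_succ, ih]; push_cast; ring
  simp [digitPowerSum_eq hdb, h]

lemma digitPowerSum_two (hdb : d < b) :
    digitPowerSum b d 2 = b * (b - 1) * (2 * b - 1) / 6 - d ^ 2 := by
  have h : ∀ n : ℕ, ∑ a ∈ range n, (a : ℝ) ^ 2 = n * (n - 1) * (2 * n - 1) / 6 := fun n ↦ by
    induction n with
    | zero => simp
    | succ n ih => rw [sum_range_succ, ih]; push_cast; ring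
  simp [digitPowerSum_eq hdb, h]

lemma moment_zero_right (hd : d ≠ 0) (hdb : d < b) (k : ℕ) : moment b d k 0 = 0 := by
  simpa [moment] using irwinDiscrepancy_const hd hdb k 1

lemma irwinDiscrepancy_add_pow (hd : d ≠ 0) (hdb : d < b) (k j : ℕ) (e : ℝ) :
    irwinDiscrepancy b d k (fun x ↦ (e + x) ^ j) =
      ∑ i ∈ range (j + 1), j.choose i * e ^ (j - i) * moment b d k i := by
  have hexpand : (fun x : ℝ ↦ (e + x) ^ j) =
      fun x ↦ ∑ i ∈ range (j + 1), j.choose i * e ^ (j - i) * x ^ i := by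
    ext x
    rw [add_comm, add_pow]
    exact sum_congr rfl fun i _ ↦ by ring
  rw [hexpand, irwinDiscrepancy_sum hd hdb k fun i _ ↦ (LipschitzOnUnit.pow i).const_mul _]
  exact sum_congr rfl fun i _ ↦ irwinDiscrepancy_const_mul b d k _ _

lemma irwinDiscrepancy_branch_pow (hd : d ≠ 0) (hdb : d < b) (k j a : ℕ) :
    irwinDiscrepancy b d k (branch b a fun x ↦ x ^ j) =
      (b : ℝ)⁻¹ ^ j * ∑ i ∈ range (j + 1), j.choose i * (a : ℝ) ^ (j - i) * moment b d k i := by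
  rw [← irwinDiscrepancy_add_pow hd hdb, ← irwinDiscrepancy_const_mul]
  congr with x
  rw [branch, div_eq_inv_mul, mul_pow]

lemma irwinDiscrepancy_transfer (hd : d ≠ 0) (hdb : d < b) (k : ℕ) {L : ℝ} {f : ℝ → ℝ}
    (hf : LipschitzOnUnit L f) :
    irwinDiscrepancy b d k (transfer b d f) =
      (b : ℝ)⁻¹ * ∑ a ∈ (range b).erase d, irwinDiscrepancy b d k (branch b a f) := by
  rw [← irwinDiscrepancy_sum hd hdb k fun a ha ↦ hf.branch (mem_range.1 (mem_of_mem_erase ha)),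
    ← irwinDiscrepancy_const_mul]
  congr with x
  rw [transfer, div_eq_inv_mul]

lemma irwinDiscrepancy_transfer_pow (hd : d ≠ 0) (hdb : d < b) (k j : ℕ) :
    irwinDiscrepancy b d k (transfer b d fun x ↦ x ^ j) = (b : ℝ)⁻¹ ^ (j + 1) *
      ∑ i ∈ range (j + 1), j.choose i * digitPowerSum b d (j - i) * moment b d k i := by
  rw [irwinDiscrepancy_transfer hd hdb k (.pow j)]
  simp only [irwinDiscrepancy_branch_pow hd hdb, digitPowerSum]
  rw [← mul_sum, sum_comm, ← mul_assoc, pow_succ']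
  congr 1
  exact sum_congr rfl fun i _ ↦ by rw [mul_sum, sum_mul]

lemma integral_branch_pow (b d j : ℕ) :
    ∫ x in (0 : ℝ)..1, branch b d (fun x ↦ x ^ j) x =
      (b : ℝ)⁻¹ ^ j * (((d + 1 : ℝ) ^ (j + 1) - d ^ (j + 1)) / (j + 1)) := by
  simp only [branch, div_eq_inv_mul (_ + _), mul_pow]
  rw [intervalIntegral.integral_const_mul,
    intervalIntegral.integral_comp_add_left (fun x : ℝ ↦ x ^ j), integral_pow, add_zero]

lemma moment_zero_eq (hd : d ≠ 0) (hdb : d < b) {j : ℕ} (hj : j ≠ 0) :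
    moment b d 0 j =
      -((b : ℝ)⁻¹ ^ j * (((d + 1 : ℝ) ^ (j + 1) - d ^ (j + 1)) / (j + 1))) +
      (b : ℝ)⁻¹ ^ (j + 1) *
        ∑ i ∈ range (j + 1), j.choose i * digitPowerSum b d (j - i) * moment b d 0 i := by
  rw [moment, irwinDiscrepancy_zero_eq hd hdb (.pow j), integral_branch_pow, zero_pow hj,
    zero_sub, irwinDiscrepancy_transfer_pow hd hdb]

lemma moment_succ_eq (hd : d ≠ 0) (hdb : d < b) (k j : ℕ) :
    moment b d (k + 1) j = (b : ℝ)⁻¹ ^ (j + 1) *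
      (∑ i ∈ range (j + 1), j.choose i * digitPowerSum b d (j - i) * moment b d (k + 1) i +
        ∑ i ∈ range (j + 1), j.choose i * (d : ℝ) ^ (j - i) * moment b d k i) := by
  rw [moment, irwinDiscrepancy_succ_eq hd hdb k (.pow j), irwinDiscrepancy_transfer_pow hd hdb,
    irwinDiscrepancy_branch_pow hd hdb]
  ring

lemma moment_zero_one_eq (hd : d ≠ 0) (hdb : d < b) :
    moment b d 0 1 =
      -(d + 1 / 2) * (b : ℝ)⁻¹ + ((b : ℝ)⁻¹ - (b : ℝ)⁻¹ ^ 2) * moment b d 0 1 := by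
  have hb : (b : ℝ) ≠ 0 := by exact_mod_cast (by omega : b ≠ 0)
  refine (moment_zero_eq hd hdb one_ne_zero).trans ?_
  simp only [sum_range_succ, range_one, sum_singleton, moment_zero_right hd hdb,
    digitPowerSum_zero hdb, Nat.choose_self, Nat.sub_self, Nat.reduceAdd,
    Nat.cast_one]
  field_simp
  ring

lemma moment_zero_two_eq (hd : d ≠ 0) (hdb : d < b) :
    moment b d 0 2 =
      -(d ^ 2 + d + 1 / 3) * (b : ℝ)⁻¹ ^ 2 +
      ((b : ℝ)⁻¹ - (b : ℝ)⁻¹ ^ 2 - 2 * d * (b : ℝ)⁻¹ ^ 3) * moment b d 0 1 +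
      ((b : ℝ)⁻¹ ^ 2 - (b : ℝ)⁻¹ ^ 3) * moment b d 0 2 := by
  have hb : (b : ℝ) ≠ 0 := by exact_mod_cast (by omega : b ≠ 0)
  refine (moment_zero_eq hd hdb two_ne_zero).trans ?_
  simp only [sum_range_succ, range_one, sum_singleton, moment_zero_right hd hdb,
    digitPowerSum_zero hdb, digitPowerSum_one hdb, Nat.choose_self, Nat.choose_one_right,
    Nat.sub_self, Nat.reduceSub, Nat.reduceAdd, Nat.cast_one, Nat.cast_ofNat]
  field_simp
  ring

lemma moment_zero_three_eq (hd : d ≠ 0) (hdb : d < b) :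
    moment b d 0 3 =
      -((d + 1 : ℝ) ^ 4 - d ^ 4) / 4 * (b : ℝ)⁻¹ ^ 3 +
      ((b : ℝ)⁻¹ * (1 - (b : ℝ)⁻¹) * (2 - (b : ℝ)⁻¹) / 2 - 3 * d ^ 2 * (b : ℝ)⁻¹ ^ 4) *
        moment b d 0 1 +
      (3 / 2 * (b : ℝ)⁻¹ ^ 2 * (1 - (b : ℝ)⁻¹) - 3 * d * (b : ℝ)⁻¹ ^ 4) * moment b d 0 2 +
      ((b : ℝ)⁻¹ ^ 3 - (b : ℝ)⁻¹ ^ 4) * moment b d 0 3 := by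
  have hb : (b : ℝ) ≠ 0 := by exact_mod_cast (by omega : b ≠ 0)
  refine (moment_zero_eq hd hdb three_ne_zero).trans ?_
  simp only [sum_range_succ, range_one, sum_singleton, moment_zero_right hd hdb,
    digitPowerSum_zero hdb, digitPowerSum_one hdb, digitPowerSum_two hdb, Nat.choose_self,
    Nat.choose_one_right, Nat.choose_succ_self_right, Nat.sub_self, Nat.reduceSub, Nat.reduceAdd,
    Nat.cast_one, Nat.cast_ofNat]
  field_simp
  ring

lemma moment_one_one_eq (hd : d ≠ 0) (hdb : d < b) :
    moment b d 1 1 =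
      ((b : ℝ)⁻¹ - (b : ℝ)⁻¹ ^ 2) * moment b d 1 1 + (b : ℝ)⁻¹ ^ 2 * moment b d 0 1 := by
  have hb : (b : ℝ) ≠ 0 := by exact_mod_cast (by omega : b ≠ 0)
  refine (moment_succ_eq hd hdb 0 1).trans ?_
  simp only [zero_add, sum_range_succ, range_one, sum_singleton, moment_zero_right hd hdb,
    digitPowerSum_zero hdb, Nat.choose_self, Nat.sub_self, Nat.reduceAdd,
    Nat.cast_one]
  field_simp
  ring

end Moment

section MomentAsymptotics

variable {d : ℕ}

lemma isBigOInvPow_irwinDiscrepancy (hd : d ≠ 0) (k : ℕ) {L : ℝ} {p : ℕ} {f : ℕ → ℝ → ℝ}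
    (hf : ∀ b > d, LipschitzOnUnit (L * (b : ℝ)⁻¹ ^ p) (f b)) :
    IsBigOInvPow (2 * k + 1 + p) fun b ↦ irwinDiscrepancy b d k (f b) :=
  .of_abs_le (C := 2 ^ (k + 1) * (d + 1) * L) fun b hb ↦
    (abs_irwinDiscrepancy_le hd hb k (hf b hb)).trans_eq (by rw [pow_add, inv_pow]; ring)

lemma isBigOInvPow_moment (hd : d ≠ 0) (k j : ℕ) :
    IsBigOInvPow (2 * k + 1) fun b ↦ moment b d k j :=
  isBigOInvPow_irwinDiscrepancy (p := 0) hd k fun _ _ ↦ by simpa using .pow j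

lemma isBigOInvPow_irwinDiscrepancy_transfer_pow (hd : d ≠ 0) (k j : ℕ) :
    IsBigOInvPow (2 * k + 2) fun b ↦ irwinDiscrepancy b d k (transfer b d fun x ↦ x ^ j) :=
  isBigOInvPow_irwinDiscrepancy (p := 1) hd k fun b _ ↦ by
    simpa [div_eq_mul_inv] using (LipschitzOnUnit.pow j).transfer (b := b) (d := d)

open IsBigOInvPow

lemma isBigOInvPow_moment_zero_one_add (hd : d ≠ 0) :
    IsBigOInvPow 5 fun b ↦
      moment b d 0 1 + (d + 1 / 2) * ((b : ℝ)⁻¹ + (b : ℝ)⁻¹ ^ 2 - (b : ℝ)⁻¹ ^ 4) :=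
  ((inv_pow_mul 4 fun h ↦ -(1 - h)).mul (isBigOInvPow_moment hd 0 1)).congr fun b hb ↦ by
    linear_combination (1 + (b : ℝ)⁻¹ - (b : ℝ)⁻¹ ^ 3) * moment_zero_one_eq hd hb

lemma isBigOInvPow_two_moment_zero (hd : d ≠ 0) {j : ℕ} (hj : 2 ≤ j) :
    IsBigOInvPow 2 fun b ↦ moment b d 0 j :=
  (((inv_pow_mul j fun _ ↦ -(((d + 1 : ℝ) ^ (j + 1) - d ^ (j + 1)) / (j + 1))).mono hj).add
    (isBigOInvPow_irwinDiscrepancy_transfer_pow hd 0 j)).congr fun b hb ↦ by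
    rw [moment_zero_eq hd hb (by omega), irwinDiscrepancy_transfer_pow hd hb]
    ring

lemma isBigOInvPow_moment_zero_two_add (hd : d ≠ 0) :
    IsBigOInvPow 4 fun b ↦ moment b d 0 2 + (d ^ 2 + 2 * d + 5 / 6) * (b : ℝ)⁻¹ ^ 2 :=
  (((inv_pow_mul 1 fun h ↦ 1 - h).mul (isBigOInvPow_moment_zero_one_add hd)).add
    ((inv_pow_mul 4 fun h ↦ (d + 1 / 2) * (1 + h - h ^ 2)).add
      (((inv_pow_mul 3 fun _ ↦ -2 * d).mul (isBigOInvPow_moment hd 0 1)).add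
        ((inv_pow_mul 2 fun h ↦ 1 - h).mul (isBigOInvPow_two_moment_zero hd le_rfl))))).congr
  fun b hb ↦ by linear_combination moment_zero_two_eq hd hb

lemma isBigOInvPow_moment_zero_three_add (hd : d ≠ 0) :
    IsBigOInvPow 3 fun b ↦ moment b d 0 3 + (d + 1 / 2) * (b : ℝ)⁻¹ ^ 2 :=
  ((inv_pow_mul 3 fun h ↦ -(((d : ℝ) + 1) ^ 4 - d ^ 4) / 4 - (d + 1 / 2) * (1 - h ^ 2)).add
    (((inv_pow_mul 1 fun _ ↦ 1).mul (isBigOInvPow_moment_zero_one_add hd)).add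
    (((inv_pow_mul 2 fun h ↦ (-3 + h) / 2 - 3 * d ^ 2 * h ^ 2).mul
      (isBigOInvPow_moment hd 0 1)).add
    (((inv_pow_mul 2 fun h ↦ 3 / 2 * (1 - h) - 3 * d * h ^ 2).mul
      (isBigOInvPow_moment hd 0 2)).add
    ((inv_pow_mul 3 fun h ↦ 1 - h).mul (isBigOInvPow_moment hd 0 3)))))).congr fun b hb ↦ by
    linear_combination moment_zero_three_eq hd hb

lemma isBigOInvPow_moment_one_one_add (hd : d ≠ 0) :
    IsBigOInvPow 5 fun b ↦
      moment b d 1 1 + (d + 1 / 2) * ((b : ℝ)⁻¹ ^ 3 + 2 * (b : ℝ)⁻¹ ^ 4) :=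
  (((inv_pow_mul 2 fun h ↦ 1 + h).mul (isBigOInvPow_moment_zero_one_add hd)).add
    ((inv_pow_mul 5 fun h ↦ (d + 1 / 2) * (-1 + h + h ^ 2)).add
      ((inv_pow_mul 3 fun _ ↦ -1).mul (isBigOInvPow_moment hd 1 1)))).congr fun b hb ↦ by
    linear_combination (1 + (b : ℝ)⁻¹) * moment_one_one_eq hd hb

lemma isBigOInvPow_four_moment_one_two (hd : d ≠ 0) :
    IsBigOInvPow 4 fun b ↦ moment b d 1 2 :=
  (((inv_pow_mul 3 fun _ ↦ 2 * d).mul (isBigOInvPow_moment hd 0 1)).add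
    (((inv_pow_mul 3 fun _ ↦ 1).mul (isBigOInvPow_moment hd 0 2)).add
      (isBigOInvPow_irwinDiscrepancy_transfer_pow hd 1 2))).congr fun b hb ↦ by
    rw [moment_succ_eq hd hb 0 2, irwinDiscrepancy_transfer_pow hd hb]
    simp only [zero_add, sum_range_succ, range_one, sum_singleton, moment_zero_right hd hb,
      Nat.choose_self, Nat.choose_one_right, Nat.sub_self, Nat.reduceSub, Nat.reduceAdd]
    push_cast
    ring

end MomentAsymptotics

section Resolvent

variable {d : ℕ}

lemma one_div_add_sub_sum {u t : ℝ} (hu : u ≠ 0) (hut : u + t ≠ 0) (J : ℕ) :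
    1 / (u + t) - ∑ j ∈ range J, (-t) ^ j / u ^ (j + 1) = (-t) ^ J / (u ^ J * (u + t)) := by
  induction J with
  | zero => simp
  | succ J ih =>
    rw [sum_range_succ, ← sub_sub, ih]
    field_simp
    ring

lemma abs_pow_succ_div_add_sub_le {u s t T : ℝ} (hu : 0 < u) (hs : s ∈ Set.Icc 0 T)
    (ht : t ∈ Set.Icc 0 T) (J : ℕ) :
    |s ^ (J + 1) / (u + s) - t ^ (J + 1) / (u + t)| ≤ (J + 1) * T ^ J / u * |s - t| := by
  refine (convex_Icc (0 : ℝ) T).norm_image_sub_le_of_norm_hasDerivWithin_le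
    (f := fun t ↦ t ^ (J + 1) / (u + t))
    (f' := fun t ↦ ((J + 1) * t ^ J * (u + t) - t ^ (J + 1)) / (u + t) ^ 2) (fun x hx ↦ ?_)
    (fun x hx ↦ ?_) ht hs
  · have hux : u + x ≠ 0 := by linarith [hx.1]
    have h := (hasDerivAt_pow (J + 1) x).fun_div ((hasDerivAt_id x).const_add u) hux
    simpa using h.hasDerivWithinAt
  · have hx0 := hx.1
    have hT : 0 ≤ T := hx0.trans hx.2
    have hpow : 0 ≤ x ^ J := by positivity
    have hnonneg : 0 ≤ (J + 1) * x ^ J * (u + x) - x ^ (J + 1) := by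
      have : 0 ≤ J * (x ^ J * (u + x)) := by positivity
      rw [pow_succ]
      nlinarith
    rw [Real.norm_of_nonneg (by positivity)]
    calc ((J + 1) * x ^ J * (u + x) - x ^ (J + 1)) / (u + x) ^ 2
        ≤ (J + 1) * x ^ J * (u + x) / (u + x) ^ 2 := by
          gcongr
          exact sub_le_self _ (by positivity)
      _ = (J + 1) * x ^ J / (u + x) := by field_simp
      _ ≤ (J + 1) * T ^ J / u := by
          gcongr
          exacts [hx.2, le_add_of_nonneg_right hx0]

lemma lipschitzOnUnit_one_div_sub_sum {u h e : ℝ} (hu : 0 < u) (hh : 0 ≤ h) (he : 0 ≤ e) (J : ℕ) :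
    LipschitzOnUnit ((J + 1) * (e + 1) ^ J * h ^ (J + 1) / u ^ (J + 2)) fun x ↦
      1 / (u + (e + x) * h) - ∑ j ∈ range (J + 1), (-h) ^ j / u ^ (j + 1) * (e + x) ^ j := by
  have hmem {x : ℝ} (hx : x ∈ I) : (e + x) * h ∈ Set.Icc 0 ((e + 1) * h) :=
    ⟨mul_nonneg (add_nonneg he hx.1) hh, by gcongr; exact hx.2⟩
  have hrem {x : ℝ} (hx : x ∈ I) :
      1 / (u + (e + x) * h) - ∑ j ∈ range (J + 1), (-h) ^ j / u ^ (j + 1) * (e + x) ^ j =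
        (-1) ^ (J + 1) / u ^ (J + 1) * (((e + x) * h) ^ (J + 1) / (u + (e + x) * h)) := by
    have hne : u + (e + x) * h ≠ 0 := by linarith [(hmem hx).1]
    rw [div_mul_div_comm, ← mul_pow, neg_one_mul, ← one_div_add_sub_sum hu.ne' hne]
    congr 1
    exact sum_congr rfl fun j _ ↦ by rw [neg_mul_eq_mul_neg, mul_pow]; ring
  intro x hx y hy
  simp only [hrem hx, hrem hy]
  rw [← mul_sub, abs_mul, abs_div, abs_pow, abs_neg, abs_one, one_pow, abs_of_pos (by positivity)]
  refine (mul_le_mul_of_nonneg_left (abs_pow_succ_div_add_sub_le hu (hmem hx) (hmem hy) J)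
    (by positivity)).trans_eq ?_
  rw [← sub_mul, add_sub_add_left_eq_sub, abs_mul, abs_of_nonneg hh, mul_pow]
  field_simp
  ring

lemma lipschitzOnUnit_sum_one_div_sub_sum {ι : Type*} {s : Finset ι} {u : ι → ℝ}
    (hu : ∀ i ∈ s, 1 ≤ u i) {h e : ℝ} (hh : 0 ≤ h) (he : 0 ≤ e) (J : ℕ) :
    LipschitzOnUnit ((J + 1) * (e + 1) ^ J * h ^ (J + 1) * ∑ i ∈ s, 1 / u i ^ 2) fun x ↦
      ∑ i ∈ s, 1 / (u i + (e + x) * h) -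
        ∑ j ∈ range (J + 1), (-h) ^ j * (∑ i ∈ s, 1 / u i ^ (j + 1)) * (e + x) ^ j := by
  have hsum := LipschitzOnUnit.sum fun i hi ↦
    lipschitzOnUnit_one_div_sub_sum (zero_lt_one.trans_le (hu i hi)) hh he J
  simp only [sum_sub_distrib] at hsum
  convert hsum.mono ?_ using 3 with x
  · rw [sum_comm]
    refine sum_congr rfl fun j _ ↦ ?_
    rw [mul_sum, sum_mul]
    exact sum_congr rfl fun i _ ↦ by rw [mul_one_div]
  · rw [mul_sum]
    refine sum_le_sum fun i hi ↦ ?_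
    have hpos : 0 < u i := zero_lt_one.trans_le (hu i hi)
    rw [mul_one_div]
    exact div_le_div_of_nonneg_left (by positivity) (by positivity)
      (pow_le_pow_right₀ (hu i hi) (by omega))

lemma isBigOInvPow_irwinDiscrepancy_sub_sum (hd : d ≠ 0) (k : ℕ) {L e : ℝ} (he : 0 ≤ e) {m p : ℕ}
    {f : ℕ → ℝ → ℝ} {c : ℕ → ℕ → ℝ}
    (hf : ∀ b > d, LipschitzOnUnit (L * (b : ℝ)⁻¹ ^ p) fun x ↦
      f b x - ∑ j ∈ range m, c b j * (e + x) ^ j) :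
    IsBigOInvPow (2 * k + 1 + p) fun b ↦
      irwinDiscrepancy b d k (f b) -
        ∑ j ∈ range m, c b j * irwinDiscrepancy b d k fun x ↦ (e + x) ^ j :=
  (isBigOInvPow_irwinDiscrepancy hd k hf).congr fun b hb ↦ by
    have hpow (j : ℕ) (_ : j ∈ range m) := (LipschitzOnUnit.add_pow he j).const_mul (c b j)
    have hadd := irwinDiscrepancy_add hd hb k (hf b hb) (.sum hpow)
    rw [irwinDiscrepancy_sum hd hb k hpow] at hadd
    simp only [sub_add_cancel, irwinDiscrepancy_const_mul] at hadd
    rw [hadd, add_sub_cancel_right]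

lemma sum_one_div_sq_le_tsum (s : Finset ℕ) :
    ∑ n ∈ s, 1 / (n : ℝ) ^ 2 ≤ ∑' n : ℕ, 1 / (n : ℝ) ^ 2 :=
  (Real.summable_one_div_nat_pow.2 one_lt_two).sum_le_tsum _ fun _ _ ↦ by positivity

/-- The value at `0` of `transfer b d` applied to `x ↦ ∑ n ∈ s, 1 / (n + x) ^ p`. -/
noncomputable def transferPowerSum (b d : ℕ) (s : Finset ℕ) (p : ℕ) : ℝ :=
  (b : ℝ)⁻¹ * ∑ i ∈ s ×ˢ (range b).erase d, 1 / ((i.1 : ℝ) + i.2 * (b : ℝ)⁻¹) ^ p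

lemma sum_product_one_div_sq_le (b d : ℕ) {s : Finset ℕ} (hs : 0 ∉ s) :
    ∑ i ∈ s ×ˢ (range b).erase d, 1 / ((i.1 : ℝ) + i.2 * (b : ℝ)⁻¹) ^ 2 ≤
      (b : ℝ) * ∑' n : ℕ, 1 / (n : ℝ) ^ 2 := by
  rw [sum_product]
  refine (sum_le_sum fun n hn ↦ ?_).trans <| (mul_sum s _ (b : ℝ)).symm.trans_le <|
    mul_le_mul_of_nonneg_left (sum_one_div_sq_le_tsum s) b.cast_nonneg
  have hn0 : n ≠ 0 := fun h ↦ hs (h ▸ hn)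
  calc ∑ a ∈ (range b).erase d, 1 / ((n : ℝ) + a * (b : ℝ)⁻¹) ^ 2
      ≤ ∑ a ∈ (range b).erase d, 1 / (n : ℝ) ^ 2 := sum_le_sum fun a _ ↦ by
        gcongr
        exact le_add_of_nonneg_right (by positivity)
    _ ≤ b * (1 / (n : ℝ) ^ 2) := by
        rw [sum_const, nsmul_eq_mul]
        gcongr
        exact (card_le_card (erase_subset _ _)).trans_eq (card_range b)

lemma isBigOInvPow_irwinDiscrepancy_transfer_sub_sum (hd : d ≠ 0) (k J : ℕ) {s : ℕ → Finset ℕ}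
    (hs : ∀ b, 0 ∉ s b) :
    IsBigOInvPow (2 * k + 1 + (J + 1)) fun b ↦
      irwinDiscrepancy b d k (transfer b d fun x ↦ ∑ n ∈ s b, 1 / (n + x)) -
        ∑ j ∈ range (J + 1),
          (-(b : ℝ)⁻¹) ^ j * transferPowerSum b d (s b) (j + 1) * moment b d k j := by
  have hexpand := isBigOInvPow_irwinDiscrepancy_sub_sum hd k le_rfl (m := J + 1) (p := J + 1)
    (L := (J + 1) * ∑' n : ℕ, 1 / (n : ℝ) ^ 2)
    (f := fun b ↦ transfer b d fun x ↦ ∑ n ∈ s b, 1 / (n + x))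
    (c := fun b j ↦ (-(b : ℝ)⁻¹) ^ j * transferPowerSum b d (s b) (j + 1)) fun b hb ↦ ?_
  · simpa only [moment, zero_add] using hexpand
  have hb0 : (b : ℝ) ≠ 0 := by exact_mod_cast (Nat.zero_lt_of_lt hb).ne'
  have hu : ∀ i ∈ s b ×ˢ (range b).erase d, 1 ≤ (i.1 : ℝ) + i.2 * (b : ℝ)⁻¹ := fun i hi ↦ by
    have hi0 : i.1 ≠ 0 := fun h ↦ hs b (h ▸ (mem_product.1 hi).1)
    have : (1 : ℝ) ≤ i.1 := by exact_mod_cast Nat.one_le_iff_ne_zero.2 hi0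
    exact this.trans (le_add_of_nonneg_right (by positivity))
  have hlip := (lipschitzOnUnit_sum_one_div_sub_sum hu (inv_nonneg.2 b.cast_nonneg) le_rfl
    J).const_mul (b : ℝ)⁻¹
  convert hlip.mono ?_ using 2 with x
  · rw [mul_sub, mul_sum (range (J + 1)) _ (b : ℝ)⁻¹]
    congr 1
    · rw [transfer, div_eq_inv_mul, sum_product_right]
      simp only [branch]
      congr 1
      exact sum_congr rfl fun a _ ↦ sum_congr rfl fun n _ ↦ by congr 1; ring
    · exact sum_congr rfl fun j _ ↦ by rw [transferPowerSum]; ring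
  · rw [abs_of_nonneg (by positivity)]
    calc (b : ℝ)⁻¹ * ((J + 1) * (0 + 1) ^ J * (b : ℝ)⁻¹ ^ (J + 1) *
          ∑ i ∈ s b ×ˢ (range b).erase d, 1 / ((i.1 : ℝ) + i.2 * (b : ℝ)⁻¹) ^ 2)
        ≤ (b : ℝ)⁻¹ * ((J + 1) * (0 + 1) ^ J * (b : ℝ)⁻¹ ^ (J + 1) *
          (b * ∑' n : ℕ, 1 / (n : ℝ) ^ 2)) := by
          gcongr
          exact sum_product_one_div_sq_le b d (hs b)
      _ = (J + 1) * (∑' n : ℕ, 1 / (n : ℝ) ^ 2) * (b : ℝ)⁻¹ ^ (J + 1) := by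
          field_simp
          simp

lemma isBigOInvPow_irwinDiscrepancy_branch_sub_sum (hd : d ≠ 0) (k J : ℕ) {s : ℕ → Finset ℕ}
    (hs : ∀ b, 0 ∉ s b) :
    IsBigOInvPow (2 * k + 1 + (J + 1)) fun b ↦
      irwinDiscrepancy b d k (branch b d fun x ↦ ∑ n ∈ s b, 1 / (n + x)) -
        ∑ j ∈ range (J + 1), (-(b : ℝ)⁻¹) ^ j * (∑ n ∈ s b, 1 / (n : ℝ) ^ (j + 1)) *
          irwinDiscrepancy b d k fun x ↦ (d + x) ^ j := by
  refine isBigOInvPow_irwinDiscrepancy_sub_sum hd k d.cast_nonneg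
    (L := (J + 1) * (d + 1) ^ J * ∑' n : ℕ, 1 / (n : ℝ) ^ 2) fun b _ ↦ ?_
  have hu : ∀ n ∈ s b, (1 : ℝ) ≤ n := fun n hn ↦ by
    exact_mod_cast Nat.one_le_iff_ne_zero.2 fun h ↦ hs b (h ▸ hn)
  simp only [branch, div_eq_mul_inv ((d : ℝ) + _)]
  refine (lipschitzOnUnit_sum_one_div_sub_sum hu (inv_nonneg.2 b.cast_nonneg) d.cast_nonneg
    J).mono ?_
  rw [mul_right_comm]
  gcongr
  exact sum_one_div_sq_le_tsum (s b)

end Resolvent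

section Quadrature

variable {b d : ℕ}

lemma abs_sum_range_sub_le {h u E : ℝ} (hh : 0 ≤ h) (hu : 1 ≤ u) {g G : ℝ → ℝ}
    (hG : ∀ v ≥ 1, |h * g v - (G v - G (v + h))| ≤ E) (N : ℕ) :
    |h * ∑ a ∈ range N, g (u + a * h) - (G u - G (u + N * h))| ≤ N * E := by
  have htelescope := sum_range_sub' (fun a : ℕ ↦ G (u + a * h)) N
  rw [Nat.cast_zero, zero_mul, add_zero] at htelescope
  rw [← htelescope, mul_sum, ← sum_sub_distrib]
  refine (abs_sum_le_sum_abs _ _).trans ?_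
  rw [← nsmul_eq_mul, ← card_range N, ← sum_const, card_range]
  refine sum_le_sum fun a _ ↦ ?_
  rw [Nat.cast_succ, add_one_mul, ← add_assoc]
  exact hG _ (hu.trans (le_add_of_nonneg_right (by positivity)))

lemma abs_transferPowerSum_sub_le (hdb : d < b) {s : Finset ℕ} (hs : 0 ∉ s) {p : ℕ} {G : ℝ → ℝ}
    {E : ℝ} (hG : ∀ u ≥ 1, |(b : ℝ)⁻¹ * (1 / u ^ p) - (G u - G (u + (b : ℝ)⁻¹))| ≤ E) :
    |transferPowerSum b d s p - ∑ n ∈ s, (G n - G (n + 1) -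
      (b : ℝ)⁻¹ * (1 / (n + d * (b : ℝ)⁻¹) ^ p))| ≤ #s * (b * E) := by
  have hb : (b : ℝ) * (b : ℝ)⁻¹ = 1 := mul_inv_cancel₀ (by exact_mod_cast (by omega : b ≠ 0))
  rw [transferPowerSum, sum_product, mul_sum, ← sum_sub_distrib, ← nsmul_eq_mul (#s), ← sum_const]
  refine (abs_sum_le_sum_abs _ _).trans (sum_le_sum fun n hn ↦ ?_)
  have hn1 : (1 : ℝ) ≤ n := by exact_mod_cast Nat.one_le_iff_ne_zero.2 fun h ↦ hs (h ▸ hn)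
  refine le_of_eq_of_le (congrArg abs ?_)
    (abs_sum_range_sub_le (inv_nonneg.2 b.cast_nonneg) hn1 hG b)
  rw [hb, ← sum_erase_add _ _ (mem_range.2 hdb)]
  ring

lemma isBigOInvPow_transferPowerSum_sub {s : ℕ → Finset ℕ} (hs : ∀ b, 0 ∉ s b) {m p q : ℕ}
    (hcard : ∀ b > d, #(s b) ≤ b ^ m) {G : ℝ → ℝ → ℝ} {C : ℝ}
    (hG : ∀ h ∈ Set.Icc (0 : ℝ) 1, ∀ u ≥ 1,
      |h * (1 / u ^ p) - (G h u - G h (u + h))| ≤ C * h ^ (q + m + 1)) :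
    IsBigOInvPow q fun b ↦ transferPowerSum b d (s b) p - ∑ n ∈ s b,
      (G (b : ℝ)⁻¹ n - G (b : ℝ)⁻¹ (n + 1) - (b : ℝ)⁻¹ * (1 / (n + d * (b : ℝ)⁻¹) ^ p)) :=
  .of_abs_le (C := C) fun b hb ↦ by
    have hb0 : (b : ℝ) ≠ 0 := by exact_mod_cast (Nat.zero_lt_of_lt hb).ne'
    have hb1 : (b : ℝ)⁻¹ ≤ 1 := Nat.cast_inv_le_one b
    have hbound := hG _ ⟨inv_nonneg.2 b.cast_nonneg, hb1⟩
    have hnonneg : 0 ≤ C * (b : ℝ)⁻¹ ^ (q + m + 1) := (abs_nonneg _).trans (hbound 1 le_rfl)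
    calc _ ≤ #(s b) * (b * (C * (b : ℝ)⁻¹ ^ (q + m + 1))) :=
          abs_transferPowerSum_sub_le hb (hs b) hbound
      _ ≤ (b : ℝ) ^ m * (b * (C * (b : ℝ)⁻¹ ^ (q + m + 1))) := by
          gcongr
          exact_mod_cast hcard b hb
      _ = C * (b : ℝ)⁻¹ ^ q := by
          rw [pow_succ, pow_add]
          field_simp
          rw [one_div, inv_pow]
          field_simp

lemma isBigOInvPow_zero_transferPowerSum {s : ℕ → Finset ℕ} (hs : ∀ b, 0 ∉ s b) {p : ℕ}
    (hp : 2 ≤ p) : IsBigOInvPow 0 fun b ↦ transferPowerSum b d (s b) p :=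
  .of_abs_le (d := 0) (C := ∑' n : ℕ, 1 / (n : ℝ) ^ 2) fun b hb ↦ by
    rw [pow_zero, mul_one, transferPowerSum, abs_of_nonneg (by positivity),
      inv_mul_le_iff₀ (by exact_mod_cast hb)]
    refine (sum_le_sum fun i hi ↦ ?_).trans (sum_product_one_div_sq_le b d (hs b))
    have hi1 : (1 : ℝ) ≤ i.1 := by
      exact_mod_cast Nat.one_le_iff_ne_zero.2 fun h ↦ hs b (h ▸ (mem_product.1 hi).1)
    have hu : (1 : ℝ) ≤ i.1 + i.2 * (b : ℝ)⁻¹ := le_add_of_le_of_nonneg hi1 (by positivity)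
    exact one_div_le_one_div_of_le (by positivity) (pow_le_pow_right₀ hu hp)

lemma abs_mul_one_div_sq_sub_le {h u : ℝ} (hh : 0 ≤ h) (hu : 1 ≤ u) :
    |h * (1 / u ^ 2) - (1 / u + h / (2 * u ^ 2) + h ^ 2 / (6 * u ^ 3) -
      (1 / (u + h) + h / (2 * (u + h) ^ 2) + h ^ 2 / (6 * (u + h) ^ 3)))| ≤ h ^ 5 := by
  have huh : 1 ≤ u + h := le_add_of_le_of_nonneg hu hh
  calc _ = |-(h ^ 5 / (6 * (u ^ 3 * (u + h) ^ 3)))| := by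
        congr 1
        field_simp
        ring
    _ = h ^ 5 / (6 * (u ^ 3 * (u + h) ^ 3)) := by rw [abs_neg, abs_of_nonneg (by positivity)]
    _ ≤ h ^ 5 := div_le_self (by positivity) (by
        linarith [one_le_mul_of_one_le_of_one_le (one_le_pow₀ hu (n := 3))
          (one_le_pow₀ huh (n := 3))])

lemma abs_mul_one_div_cube_sub_le {h u : ℝ} (hh : 0 ≤ h) (hu : 1 ≤ u) :
    |h * (1 / u ^ 3) - (1 / (2 * u ^ 2) + h / (2 * u ^ 3) -
      (1 / (2 * (u + h) ^ 2) + h / (2 * (u + h) ^ 3)))| ≤ h ^ 3 := by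
  have huh : 1 ≤ u + h := le_add_of_le_of_nonneg hu hh
  have hle : (2 * u + h) / (2 * u ^ 3 * (u + h) ^ 3) ≤ 1 := by
    refine div_le_one_of_le₀ ?_ (by positivity)
    calc 2 * u + h ≤ 2 * 1 * (u + h) := by linarith
      _ ≤ 2 * u ^ 3 * (u + h) ^ 3 := by
        gcongr
        exacts [one_le_pow₀ hu, le_self_pow₀ huh three_ne_zero]
  calc _ = |(2 * u + h) / (2 * u ^ 3 * (u + h) ^ 3) * h ^ 3| := by
        congr 1
        field_simp
        ring
    _ ≤ h ^ 3 := by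
        rw [abs_of_nonneg (by positivity)]
        exact mul_le_of_le_one_left (by positivity) hle

lemma abs_mul_one_div_fourth_sub_le {h u : ℝ} (hh : 0 ≤ h) (hu : 1 ≤ u) :
    |h * (1 / u ^ 4) - (1 / (3 * u ^ 3) - 1 / (3 * (u + h) ^ 3))| ≤ 2 * h ^ 2 := by
  have huh : 1 ≤ u + h := le_add_of_le_of_nonneg hu hh
  have hle : (6 * u ^ 2 + 8 * u * h + 3 * h ^ 2) / (3 * u ^ 4 * (u + h) ^ 3) ≤ 2 := by
    refine (div_le_iff₀ (by positivity)).2 ?_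
    calc 6 * u ^ 2 + 8 * u * h + 3 * h ^ 2 ≤ 2 * (3 * 1 * (u + h) ^ 2) := by nlinarith
      _ ≤ 2 * (3 * u ^ 4 * (u + h) ^ 3) := by
        gcongr
        exacts [one_le_pow₀ hu, by norm_num]
  calc _ = |(6 * u ^ 2 + 8 * u * h + 3 * h ^ 2) / (3 * u ^ 4 * (u + h) ^ 3) * h ^ 2| := by
        congr 1
        field_simp
        ring
    _ ≤ 2 * h ^ 2 := by
        rw [abs_of_nonneg (by positivity)]
        gcongr

end Quadrature

section ZetaTails

variable {b d : ℕ}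

lemma tsum_le_of_le_sub {f g : ℕ → ℝ} (hf : Summable f) (hg : Tendsto g atTop (nhds 0))
    (hfg : ∀ n, f n ≤ g n - g (n + 1)) : ∑' n, f n ≤ g 0 :=
  le_of_tendsto_of_tendsto' hf.hasSum.tendsto_sum_nat (by simpa using hg.const_sub (g 0))
    fun N ↦ (sum_le_sum fun n _ ↦ hfg n).trans_eq (sum_range_sub' g N)

lemma summable_one_div_nat_add_pow (b : ℕ) {p : ℕ} (hp : 1 < p) :
    Summable fun n : ℕ ↦ 1 / ((n + b : ℕ) : ℝ) ^ p :=
  (summable_nat_add_iff b).2 (Real.summable_one_div_nat_pow.2 hp)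

lemma sum_otherDigits_one_div_pow_eq (hd : d ≠ 0) (hdb : d < b) {p : ℕ} (hp : 1 < p) :
    ∑ n ∈ otherDigits b d, 1 / (n : ℝ) ^ p =
      zetaR p - 1 / (d : ℝ) ^ p - ∑' n : ℕ, 1 / ((n + b : ℕ) : ℝ) ^ p := by
  have hsummable := Real.summable_one_div_nat_pow.2 hp
  have hzeta : zetaR p = ∑' n : ℕ, 1 / (n : ℝ) ^ p := by
    rw [hsummable.tsum_eq_zero_add, zetaR]
    simp [(zero_lt_one.trans hp).ne']
  have hsplit := sum_otherDigits_add hd hdb fun n ↦ 1 / (n : ℝ) ^ p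
  have hzero := sum_eq_sum_Ico_succ_bot (Nat.zero_lt_of_lt hdb) fun n ↦ 1 / (n : ℝ) ^ p
  rw [Nat.cast_zero, zero_pow (by omega), div_zero, zero_add, zero_add] at hzero
  rw [hzeta, ← hsummable.sum_add_tsum_nat_add b, range_eq_Ico, hzero, ← hsplit]
  ring

lemma tendsto_const_div_nat_add_pow_atTop (b : ℕ) (c : ℝ) {p : ℕ} (hp : p ≠ 0) :
    Tendsto (fun n : ℕ ↦ c / ((n + b : ℕ) : ℝ) ^ p) atTop (nhds 0) :=
  (tendsto_const_div_pow c p hp).comp (tendsto_natCast_atTop_atTop.comp (tendsto_add_atTop_nat b))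

lemma one_div_sq_le_sub {u : ℝ} (hu : 0 < u) :
    1 / u ^ 2 ≤ 1 / u ^ 1 + 1 / 2 / u ^ 2 + 1 / 6 / u ^ 3 -
      (1 / (u + 1) ^ 1 + 1 / 2 / (u + 1) ^ 2 + 1 / 6 / (u + 1) ^ 3) := by
  have hpos : 0 ≤ 1 / (6 * u ^ 3 * (u + 1) ^ 3) := by positivity
  rw [← sub_nonneg]
  convert hpos using 1
  field_simp
  ring

lemma sub_le_one_div_sq {u : ℝ} (hu : 0 < u) :
    1 / u ^ 1 + 1 / 2 / u ^ 2 - (1 / (u + 1) ^ 1 + 1 / 2 / (u + 1) ^ 2) ≤ 1 / u ^ 2 := by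
  have hpos : 0 ≤ 1 / (2 * u ^ 2 * (u + 1) ^ 2) := by positivity
  rw [← sub_nonneg]
  convert hpos using 1
  field_simp
  ring

lemma abs_tsum_one_div_nat_add_sq_sub_le (hb : b ≠ 0) :
    |∑' n : ℕ, 1 / ((n + b : ℕ) : ℝ) ^ 2 - ((b : ℝ)⁻¹ + (b : ℝ)⁻¹ ^ 2 / 2)| ≤
      1 / 6 * (b : ℝ)⁻¹ ^ 3 := by
  have hsummable := summable_one_div_nat_add_pow b one_lt_two
  have hlead := (tendsto_const_div_nat_add_pow_atTop b 1 one_ne_zero).add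
    (tendsto_const_div_nat_add_pow_atTop b (1 / 2) two_ne_zero)
  have htail := hlead.add (tendsto_const_div_nat_add_pow_atTop b (1 / 6) three_ne_zero)
  have hneg := hlead.neg
  simp only [add_zero, neg_zero] at htail hneg
  have hpos (n : ℕ) : (0 : ℝ) < (n + b : ℕ) := by positivity
  have hupper := tsum_le_of_le_sub hsummable htail fun n ↦ by
    rw [Nat.add_right_comm n 1 b, Nat.cast_succ (n + b)]
    exact one_div_sq_le_sub (hpos n)
  have hlower := tsum_le_of_le_sub hsummable.neg hneg fun n ↦ by
    rw [Nat.add_right_comm n 1 b, Nat.cast_succ (n + b), neg_sub_neg]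
    linarith [sub_le_one_div_sq (hpos n)]
  rw [tsum_neg, zero_add] at hlower
  rw [zero_add] at hupper
  have h₁ : 1 / (b : ℝ) ^ 1 + 1 / 2 / (b : ℝ) ^ 2 = (b : ℝ)⁻¹ + (b : ℝ)⁻¹ ^ 2 / 2 := by ring
  have h₂ : 1 / 6 / (b : ℝ) ^ 3 = 1 / 6 * (b : ℝ)⁻¹ ^ 3 := by ring
  rw [h₁] at hupper hlower
  rw [h₂] at hupper
  rw [abs_le]
  constructor <;> linarith [show (0 : ℝ) ≤ 1 / 6 * (b : ℝ)⁻¹ ^ 3 by positivity]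

lemma isBigOInvPow_tsum_one_div_nat_add_sq_sub :
    IsBigOInvPow 3 fun b ↦
      ∑' n : ℕ, 1 / ((n + b : ℕ) : ℝ) ^ 2 - ((b : ℝ)⁻¹ + (b : ℝ)⁻¹ ^ 2 / 2) :=
  .of_abs_le (d := 0) fun _ hb ↦ abs_tsum_one_div_nat_add_sq_sub_le hb.ne'

lemma tsum_one_div_nat_add_pow_le (hb : b ≠ 0) (p : ℕ) :
    ∑' n : ℕ, 1 / ((n + b : ℕ) : ℝ) ^ (p + 2) ≤ 2 * (b : ℝ)⁻¹ ^ (p + 1) := by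
  have hsq := (abs_le.1 (abs_tsum_one_div_nat_add_sq_sub_le hb)).2
  have hinv : (b : ℝ)⁻¹ ≤ 1 := Nat.cast_inv_le_one b
  have hinv0 : 0 ≤ (b : ℝ)⁻¹ := by positivity
  calc ∑' n : ℕ, 1 / ((n + b : ℕ) : ℝ) ^ (p + 2)
      ≤ ∑' n : ℕ, (b : ℝ)⁻¹ ^ p * (1 / ((n + b : ℕ) : ℝ) ^ 2) := by
        refine Summable.tsum_le_tsum (fun n ↦ ?_) (summable_one_div_nat_add_pow b (by omega))
          ((summable_one_div_nat_add_pow b one_lt_two).mul_left _)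
        rw [inv_pow, ← one_div, one_div_mul_one_div, pow_add]
        gcongr
        exact_mod_cast b.le_add_left n
    _ = (b : ℝ)⁻¹ ^ p * ∑' n : ℕ, 1 / ((n + b : ℕ) : ℝ) ^ 2 := tsum_mul_left
    _ ≤ (b : ℝ)⁻¹ ^ p * (2 * (b : ℝ)⁻¹) := by
        gcongr
        nlinarith [pow_nonneg hinv0 2]
    _ = 2 * (b : ℝ)⁻¹ ^ (p + 1) := by ring

lemma isBigOInvPow_tsum_one_div_nat_add_pow (p : ℕ) :
    IsBigOInvPow (p + 1) fun b ↦ ∑' n : ℕ, 1 / ((n + b : ℕ) : ℝ) ^ (p + 2) :=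
  .of_abs_le (d := 0) fun _ hb ↦ by
    rw [abs_of_nonneg (tsum_nonneg fun _ ↦ by positivity)]
    exact tsum_one_div_nat_add_pow_le hb.ne' p

end ZetaTails

section SumAsymptotics

variable {d : ℕ}

open IsBigOInvPow

lemma isBigOInvPow_sum_otherDigits_two_sub (hd : d ≠ 0) :
    IsBigOInvPow 3 fun b ↦ ∑ n ∈ otherDigits b d, 1 / (n : ℝ) ^ 2 -
      (zetaR 2 - 1 / d ^ 2 - (b : ℝ)⁻¹ - (b : ℝ)⁻¹ ^ 2 / 2) :=
  ((inv_pow_mul 0 fun _ ↦ -1).mul isBigOInvPow_tsum_one_div_nat_add_sq_sub).congr fun b hb ↦ by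
    rw [sum_otherDigits_one_div_pow_eq hd hb one_lt_two]
    ring

lemma isBigOInvPow_sum_otherDigits_sub (hd : d ≠ 0) (p : ℕ) :
    IsBigOInvPow (p + 1) fun b ↦ ∑ n ∈ otherDigits b d, 1 / (n : ℝ) ^ (p + 2) -
      (zetaR (p + 2) - 1 / d ^ (p + 2)) :=
  ((inv_pow_mul 0 fun _ ↦ -1).mul (isBigOInvPow_tsum_one_div_nat_add_pow p)
    (zero_add _).ge).congr fun b hb ↦ by
    rw [sum_otherDigits_one_div_pow_eq hd hb (by omega)]
    ring

lemma isBigOInvPow_transferPowerSum_singleton_sub (hd : d ≠ 0) {p q : ℕ} {G : ℝ → ℝ → ℝ} {C : ℝ}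
    (hG : ∀ h ∈ Set.Icc (0 : ℝ) 1, ∀ u ≥ 1,
      |h * (1 / u ^ p) - (G h u - G h (u + h))| ≤ C * h ^ (q + 1)) :
    IsBigOInvPow q fun b ↦ transferPowerSum b d {d} p - (G (b : ℝ)⁻¹ d - G (b : ℝ)⁻¹ (d + 1) -
      (b : ℝ)⁻¹ * (1 / (d + d * (b : ℝ)⁻¹) ^ p)) := by
  simpa only [sum_singleton] using
    isBigOInvPow_transferPowerSum_sub (s := fun _ ↦ {d}) (d := d) (m := 0)
      (by simpa using hd.symm) (by simp) hG

lemma isBigOInvPow_transferPowerSum_singleton_two_sub (hd : d ≠ 0) :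
    IsBigOInvPow 4 fun b ↦ transferPowerSum b d {d} 2 -
      (1 / d - 1 / (d + 1) + (b : ℝ)⁻¹ / 2 * (1 / d ^ 2 - 1 / (d + 1) ^ 2) +
        (b : ℝ)⁻¹ ^ 2 / 6 * (1 / d ^ 3 - 1 / (d + 1) ^ 3) -
        (b : ℝ)⁻¹ / d ^ 2 * (1 - 2 * (b : ℝ)⁻¹ + 3 * (b : ℝ)⁻¹ ^ 2)) :=
  ((isBigOInvPow_transferPowerSum_singleton_sub hd (q := 4) fun _ hh _ hu ↦
      (abs_mul_one_div_sq_sub_le hh.1 hu).trans_eq (one_mul _).symm).add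
    (inv_pow_mul 4 (fun h ↦ (4 + 3 * h) / (d ^ 2 * (1 + h) ^ 2))
      (by fun_prop (disch := simpa)))).congr (d := d) fun b hb ↦ by
    have : (b : ℝ) ≠ 0 := by exact_mod_cast (Nat.zero_lt_of_lt hb).ne'
    field_simp
    ring

lemma isBigOInvPow_transferPowerSum_singleton_three_sub (hd : d ≠ 0) :
    IsBigOInvPow 2 fun b ↦ transferPowerSum b d {d} 3 -
      (1 / 2 * (1 / d ^ 2 - 1 / (d + 1) ^ 2) + (b : ℝ)⁻¹ / 2 * (1 / d ^ 3 - 1 / (d + 1) ^ 3) -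
        (b : ℝ)⁻¹ / d ^ 3) :=
  ((isBigOInvPow_transferPowerSum_singleton_sub hd (q := 2) fun _ hh _ hu ↦
      (abs_mul_one_div_cube_sub_le hh.1 hu).trans_eq (one_mul _).symm).add
    (inv_pow_mul 2 (fun h ↦ (3 + 3 * h + h ^ 2) / (d ^ 3 * (1 + h) ^ 3))
      (by fun_prop (disch := simpa)))).congr (d := d) fun b hb ↦ by
    have : (b : ℝ) ≠ 0 := by exact_mod_cast (Nat.zero_lt_of_lt hb).ne'
    field_simp
    ring

lemma isBigOInvPow_transferPowerSum_singleton_four_sub (hd : d ≠ 0) :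
    IsBigOInvPow 1 fun b ↦ transferPowerSum b d {d} 4 - 1 / 3 * (1 / d ^ 3 - 1 / (d + 1) ^ 3) :=
  ((isBigOInvPow_transferPowerSum_singleton_sub hd (q := 1)
      (G := fun _ u ↦ 1 / (3 * u ^ 3)) fun _ hh _ ↦ abs_mul_one_div_fourth_sub_le hh.1).add
    (inv_pow_mul 1 (fun h ↦ -(1 / (d + d * h) ^ 4)) (by fun_prop (disch := simpa)))).congr
  (d := d) fun b _ ↦ by
    field_simp
    ring

lemma zero_notMem_otherDigits (b d : ℕ) : 0 ∉ otherDigits b d := fun h ↦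
  ne_zero_of_mem_otherDigits h rfl

lemma card_otherDigits_le (b d : ℕ) : #(otherDigits b d) ≤ b :=
  (card_le_card (erase_subset _ _)).trans (by simp)

lemma sum_otherDigits_sub_add_one {b : ℕ} (hd : d ≠ 0) (hdb : d < b) (G : ℝ → ℝ) :
    ∑ n ∈ otherDigits b d, (G n - G (n + 1)) = G 1 - G b - (G d - G (d + 1)) := by
  have htelescope := sum_Ico_sub (fun n : ℕ ↦ -G n) (show 1 ≤ b by omega)
  simp only [neg_sub_neg, Nat.cast_succ, Nat.cast_zero, zero_add] at htelescope
  rw [← htelescope, ← sum_otherDigits_add hd hdb, add_sub_cancel_right]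

lemma abs_one_div_add_sq_sub_le {u t : ℝ} (hu : 1 ≤ u) (ht : 0 ≤ t) :
    |1 / (u + t) ^ 2 - 1 / u ^ 2| ≤ 2 * t * (1 / u ^ 2) := by
  have hle : (2 * u + t) / (u + t) ^ 2 ≤ 2 := by
    rw [div_le_iff₀ (by positivity)]
    nlinarith
  calc |1 / (u + t) ^ 2 - 1 / u ^ 2| = |-((2 * u + t) / (u + t) ^ 2 * t * (1 / u ^ 2))| := by
        congr 1
        field_simp
        ring
    _ ≤ 2 * t * (1 / u ^ 2) := by
        rw [abs_neg, abs_of_nonneg (by positivity)]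
        gcongr

lemma isBigOInvPow_sum_one_div_add_mul_sq_sub {s : ℕ → Finset ℕ} (hs : ∀ b, 0 ∉ s b) :
    IsBigOInvPow 1 fun b ↦
      ∑ n ∈ s b, 1 / (n + d * (b : ℝ)⁻¹) ^ 2 - ∑ n ∈ s b, 1 / (n : ℝ) ^ 2 :=
  .of_abs_le (d := 0) (C := 2 * d * ∑' n : ℕ, 1 / (n : ℝ) ^ 2) fun b _ ↦ by
    rw [← sum_sub_distrib]
    calc |∑ n ∈ s b, (1 / (n + d * (b : ℝ)⁻¹) ^ 2 - 1 / (n : ℝ) ^ 2)|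
        ≤ ∑ n ∈ s b, 2 * (d * (b : ℝ)⁻¹) * (1 / (n : ℝ) ^ 2) := by
          refine (abs_sum_le_sum_abs _ _).trans (sum_le_sum fun n hn ↦ ?_)
          have hn1 : (1 : ℝ) ≤ n := by
            exact_mod_cast Nat.one_le_iff_ne_zero.2 fun h ↦ hs b (h ▸ hn)
          exact abs_one_div_add_sq_sub_le hn1 (by positivity)
      _ ≤ 2 * (d * (b : ℝ)⁻¹) * ∑' n : ℕ, 1 / (n : ℝ) ^ 2 := by
          rw [← mul_sum]
          gcongr
          exact sum_one_div_sq_le_tsum (s b)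
      _ = 2 * d * (∑' n : ℕ, 1 / (n : ℝ) ^ 2) * (b : ℝ)⁻¹ ^ 1 := by ring

lemma isBigOInvPow_transferPowerSum_otherDigits_two_sub (hd : d ≠ 0) :
    IsBigOInvPow 2 fun b ↦ transferPowerSum b d (otherDigits b d) 2 -
      (1 - (b : ℝ)⁻¹ - (1 / d - 1 / (d + 1)) +
        (b : ℝ)⁻¹ / 2 * (1 - 1 / d ^ 2 + 1 / (d + 1) ^ 2) -
        (b : ℝ)⁻¹ * (zetaR 2 - 1 / d ^ 2)) := by
  have hquad := (isBigOInvPow_transferPowerSum_sub (d := d) (m := 1) (q := 3)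
    (fun b ↦ zero_notMem_otherDigits b d) (fun b _ ↦ by simpa using card_otherDigits_le b d)
    fun _ hh _ hu ↦ (abs_mul_one_div_sq_sub_le hh.1 hu).trans_eq (one_mul _).symm).mono
      (show 2 ≤ 3 by norm_num)
  have hcolumn := (isBigOInvPow_sum_one_div_add_mul_sq_sub (d := d)
    fun b ↦ zero_notMem_otherDigits b d).add
    (isBigOInvPow_sum_otherDigits_sub hd 0)
  refine (hquad.add (((inv_pow_mul 1 fun _ ↦ -1).mul hcolumn).add (inv_pow_mul 2 fun h ↦
    (1 - (1 / d ^ 3 - 1 / (d + 1) ^ 3)) / 6 - h / 2 - h ^ 3 / 6))).congr (d := d) fun b hb ↦ ?_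
  have hb0 : (b : ℝ) ≠ 0 := by exact_mod_cast (Nat.zero_lt_of_lt hb).ne'
  rw [sum_sub_distrib, sum_otherDigits_sub_add_one hd hb fun u ↦
    1 / u + (b : ℝ)⁻¹ / (2 * u ^ 2) + (b : ℝ)⁻¹ ^ 2 / (6 * u ^ 3), ← mul_sum]
  field_simp
  ring

end SumAsymptotics

section BranchIntegral

variable {d : ℕ}

lemma abs_one_div_add_sub_sum_le {u t : ℝ} (hu : 1 ≤ u) (ht : 0 ≤ t) (J : ℕ) :
    |1 / (u + t) - ∑ j ∈ range J, (-1) ^ j / u ^ (j + 1) * t ^ j| ≤ t ^ J := by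
  have hut : 1 ≤ u + t := le_add_of_le_of_nonneg hu ht
  calc |1 / (u + t) - ∑ j ∈ range J, (-1) ^ j / u ^ (j + 1) * t ^ j|
      = |(-t) ^ J / (u ^ J * (u + t))| := by
        rw [← one_div_add_sub_sum (by positivity) (by positivity) J]
        congr 2
        exact sum_congr rfl fun j _ ↦ by rw [neg_pow t, mul_div_right_comm]
    _ = t ^ J / (u ^ J * (u + t)) := by
        rw [abs_div, abs_pow, abs_neg, abs_of_nonneg ht, abs_of_pos (by positivity)]
    _ ≤ t ^ J := div_le_self (by positivity) <|
        one_le_mul_of_one_le_of_one_le (one_le_pow₀ hu) hut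

lemma isBigOInvPow_integral_branch_one_div_add_sub (hd : d ≠ 0) (J : ℕ) :
    IsBigOInvPow J fun b ↦ (∫ x in 0..1, branch b d (fun x ↦ 1 / (d + x)) x) -
      ∑ j ∈ range J, (-1) ^ j / (d : ℝ) ^ (j + 1) *
        ((b : ℝ)⁻¹ ^ j * (((d + 1) ^ (j + 1) - d ^ (j + 1)) / (j + 1))) :=
  .of_abs_le (C := (d + 1) ^ J) fun b hb ↦ by
    have hpow (j : ℕ) (_ : j ∈ range J) :=
      (((LipschitzOnUnit.pow j).branch hb).const_mul ((-1) ^ j / (d : ℝ) ^ (j + 1)))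
    simp only [← integral_branch_pow b d, ← intervalIntegral.integral_const_mul]
    rw [← intervalIntegral.integral_finsetSum fun j hj ↦ (hpow j hj).intervalIntegrable,
      ← intervalIntegral.integral_sub
        ((lipschitzOnUnit_one_div_add hd).branch hb).intervalIntegrable
        (LipschitzOnUnit.sum hpow).intervalIntegrable]
    refine abs_integral_le_of_abs_le fun x hx ↦ ?_
    have hx0 := hx.1
    have hd1 : (1 : ℝ) ≤ d := by exact_mod_cast Nat.one_le_iff_ne_zero.2 hd
    refine (abs_one_div_add_sub_sum_le hd1 (by positivity) J).trans ?_
    rw [div_eq_mul_inv, mul_pow]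
    gcongr
    exact hx.2

end BranchIntegral

section Expansion

variable {b d : ℕ}

open IsBigOInvPow

lemma isBigOInvPow_irwinDiscrepancy_transfer_one_div_add_sub (hd : d ≠ 0) :
    IsBigOInvPow 6 fun b ↦ irwinDiscrepancy b d 0 (transfer b d fun x ↦ 1 / (d + x)) -
      ((d + 1 / 2) * ((b : ℝ)⁻¹ ^ 2 + (b : ℝ)⁻¹ ^ 3 - (b : ℝ)⁻¹ ^ 5) *
          (1 / d - 1 / (d + 1) + (b : ℝ)⁻¹ / 2 * (1 / d ^ 2 - 1 / (d + 1) ^ 2) +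
            (b : ℝ)⁻¹ ^ 2 / 6 * (1 / d ^ 3 - 1 / (d + 1) ^ 3) -
            (b : ℝ)⁻¹ / d ^ 2 * (1 - 2 * (b : ℝ)⁻¹ + 3 * (b : ℝ)⁻¹ ^ 2)) -
        (d ^ 2 + 2 * d + 5 / 6) * (b : ℝ)⁻¹ ^ 4 *
          (1 / 2 * (1 / d ^ 2 - 1 / (d + 1) ^ 2) +
            (b : ℝ)⁻¹ / 2 * (1 / d ^ 3 - 1 / (d + 1) ^ 3) - (b : ℝ)⁻¹ / d ^ 3) +
        (d + 1 / 2) * (b : ℝ)⁻¹ ^ 5 * (1 / 3 * (1 / d ^ 3 - 1 / (d + 1) ^ 3))) := by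
  have hs (_ : ℕ) : 0 ∉ ({d} : Finset ℕ) := by simpa using hd.symm
  have hT (p : ℕ) (hp : 2 ≤ p) := isBigOInvPow_zero_transferPowerSum (d := d) hs hp
  have hone := (((inv_pow_mul 1 fun _ ↦ -1).mul (hT 2 le_rfl) (k := 1)).mul
      (isBigOInvPow_moment_zero_one_add hd) (k := 6)).add
    ((inv_pow_mul 2 fun h ↦ (d + 1 / 2) * (1 + h - h ^ 3)).mul
      (isBigOInvPow_transferPowerSum_singleton_two_sub hd))
  have htwo := (((inv_pow_mul 2 fun _ ↦ 1).mul (hT 3 (by norm_num)) (k := 2)).mul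
      (isBigOInvPow_moment_zero_two_add hd) (k := 6)).add
    ((inv_pow_mul 4 fun _ ↦ -(d ^ 2 + 2 * d + 5 / 6)).mul
      (isBigOInvPow_transferPowerSum_singleton_three_sub hd))
  have hthree := (((inv_pow_mul 3 fun _ ↦ -1).mul (hT 4 (by norm_num)) (k := 3)).mul
      (isBigOInvPow_moment_zero_three_add hd) (k := 6)).add
    ((inv_pow_mul 5 fun _ ↦ d + 1 / 2).mul (isBigOInvPow_transferPowerSum_singleton_four_sub hd))
  have hfour := ((inv_pow_mul 4 fun _ ↦ 1).mul (hT 5 (by norm_num)) (k := 4)).mul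
    (isBigOInvPow_two_moment_zero hd (j := 4) (by norm_num)) (k := 6)
  refine ((isBigOInvPow_irwinDiscrepancy_transfer_sub_sum hd 0 4 hs).add
    ((hone.add htwo).add (hthree.add hfour))).congr (d := d) fun b hb ↦ ?_
  simp only [sum_range_succ, range_zero, sum_empty, moment_zero_right hd hb, sum_singleton]
  ring

lemma isBigOInvPow_irwinDiscrepancy_one_transfer_sub (hd : d ≠ 0) :
    IsBigOInvPow 6 fun b ↦
      irwinDiscrepancy b d 1 (transfer b d fun x ↦ ∑ n ∈ otherDigits b d, 1 / (n + x)) -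
      (d + 1 / 2) * ((b : ℝ)⁻¹ ^ 4 + 2 * (b : ℝ)⁻¹ ^ 5) *
        (1 - (b : ℝ)⁻¹ - (1 / d - 1 / (d + 1)) +
          (b : ℝ)⁻¹ / 2 * (1 - 1 / d ^ 2 + 1 / (d + 1) ^ 2) -
          (b : ℝ)⁻¹ * (zetaR 2 - 1 / d ^ 2)) := by
  have hs (b : ℕ) := zero_notMem_otherDigits b d
  have hT (p : ℕ) (hp : 2 ≤ p) := isBigOInvPow_zero_transferPowerSum (d := d) hs hp
  have hone := (((inv_pow_mul 1 fun _ ↦ -1).mul (hT 2 le_rfl) (k := 1)).mul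
      (isBigOInvPow_moment_one_one_add hd) (k := 6)).add
    ((inv_pow_mul 4 fun h ↦ (d + 1 / 2) * (1 + 2 * h)).mul
      (isBigOInvPow_transferPowerSum_otherDigits_two_sub hd))
  have htwo := ((inv_pow_mul 2 fun _ ↦ 1).mul (hT 3 (by norm_num)) (k := 2)).mul
    (isBigOInvPow_four_moment_one_two hd) (k := 6)
  refine ((isBigOInvPow_irwinDiscrepancy_transfer_sub_sum hd 1 2 hs).add
    (hone.add htwo)).congr (d := d) fun b hb ↦ ?_
  simp only [sum_range_succ, range_zero, sum_empty, moment_zero_right hd hb]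
  ring

lemma isBigOInvPow_irwinDiscrepancy_branch_sub (hd : d ≠ 0) :
    IsBigOInvPow 5 fun b ↦
      irwinDiscrepancy b d 0 (branch b d fun x ↦ ∑ n ∈ otherDigits b d, 1 / (n + x)) -
      ((d + 1 / 2) * ((zetaR 2 - 1 / d ^ 2) * ((b : ℝ)⁻¹ ^ 2 + (b : ℝ)⁻¹ ^ 3) -
          (b : ℝ)⁻¹ ^ 3 - 3 / 2 * (b : ℝ)⁻¹ ^ 4) -
        (zetaR 3 - 1 / d ^ 3) * ((2 * d + 1) * d * (b : ℝ)⁻¹ ^ 3 +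
          (3 * d ^ 2 + 3 * d + 5 / 6) * (b : ℝ)⁻¹ ^ 4) +
        (zetaR 4 - 1 / d ^ 4) * (3 * d ^ 2 * (d + 1 / 2) * (b : ℝ)⁻¹ ^ 4)) := by
  have hpow (j : ℕ) : IsBigOInvPow 1 fun b ↦ irwinDiscrepancy b d 0 fun x ↦ (d + x) ^ j :=
    isBigOInvPow_irwinDiscrepancy (p := 0) hd 0 fun b _ ↦ by simpa using .add_pow d.cast_nonneg j
  have hone := (((inv_pow_mul 1 fun _ ↦ -1).mul (isBigOInvPow_sum_otherDigits_two_sub hd)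
      (k := 4)).mul (hpow 1) (k := 5)).add
    ((inv_pow_mul 1 fun h ↦ -(zetaR 2 - 1 / d ^ 2 - h - h ^ 2 / 2)).mul
      (isBigOInvPow_moment_zero_one_add hd))
  have htwo := (((inv_pow_mul 2 fun _ ↦ 1).mul (isBigOInvPow_sum_otherDigits_sub hd 1)
      (k := 4)).mul (hpow 2) (k := 5)).add
    ((inv_pow_mul 2 fun _ ↦ zetaR 3 - 1 / d ^ 3).mul
      (((inv_pow_mul 0 fun _ ↦ 2 * d).mul (isBigOInvPow_moment_zero_one_add hd) (k := 3)).add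
        (isBigOInvPow_moment_zero_two_add hd |>.mono (by norm_num))))
  have hthree := (((inv_pow_mul 3 fun _ ↦ -1).mul (isBigOInvPow_sum_otherDigits_sub hd 2)
      (k := 4)).mul (hpow 3) (k := 5)).add
    ((inv_pow_mul 3 fun _ ↦ -(zetaR 4 - 1 / d ^ 4)).mul
      ((((inv_pow_mul 0 fun _ ↦ 3 * d ^ 2).mul (isBigOInvPow_moment_zero_one_add hd) (k := 2)).add
        ((inv_pow_mul 0 fun _ ↦ 3 * d).mul (isBigOInvPow_two_moment_zero hd le_rfl))).add
        (isBigOInvPow_two_moment_zero hd (j := 3) (by norm_num))))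
  have hremainder := inv_pow_mul 5 fun h ↦
    (d + 1 / 2) * (-(1 / 2) - (zetaR 2 - 1 / d ^ 2) + h + h ^ 2 / 2) +
      (zetaR 3 - 1 / d ^ 3) * (2 * d + 1) * d * h +
      (zetaR 4 - 1 / d ^ 4) * (3 * d ^ 2) * (d + 1 / 2) * (1 - h ^ 2)
  refine ((isBigOInvPow_irwinDiscrepancy_branch_sub_sum hd 0 3 fun b ↦
    zero_notMem_otherDigits b d).add ((hone.add htwo).add (hthree.add hremainder))).congr
    (d := d) fun b hb ↦ ?_
  simp only [irwinDiscrepancy_add_pow hd hb, sum_range_succ, range_zero, sum_empty,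
    moment_zero_right hd hb, Nat.choose_self, Nat.choose_one_right, Nat.choose_succ_self_right,
    Nat.reduceSub, Nat.reduceAdd, Nat.cast_one, Nat.cast_ofNat]
  ring

lemma irwinSum_one_eq (hd : d ≠ 0) (hdb : d < b) :
    irwinSum b d 1 = b * Real.log b +
      (1 / d - ∫ x in 0..1, branch b d (fun x ↦ 1 / (d + x)) x) +
      irwinDiscrepancy b d 0 (transfer b d fun x ↦ 1 / (d + x)) +
      irwinDiscrepancy b d 1 (transfer b d fun x ↦ ∑ n ∈ otherDigits b d, 1 / (n + x)) +
      irwinDiscrepancy b d 0 (branch b d fun x ↦ ∑ n ∈ otherDigits b d, 1 / (n + x)) / b := by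
  rw [irwinSum_succ_eq hd hdb 0,
    irwinDiscrepancy_succ_eq hd hdb 0 (lipschitzOnUnit_sum_one_div_add b d),
    irwinDiscrepancy_zero_eq hd hdb (lipschitzOnUnit_one_div_add hd), add_zero]
  ring

end Expansion

end Irwin

theorem irwin_d_one_asymptotic (d : ℕ) (hd : 1 ≤ d) (a1 a2 a3 a4 a5 : ℝ)
    (h1 : a1 = ((d : ℝ) + 1 / 2) / (d : ℝ) ^ 2)
    (h2 : a2 = -(9 * (d : ℝ) ^ 2 + 8 * d + 2) / (6 * (d : ℝ) ^ 3 * ((d : ℝ) + 1)))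
    (h3 : a3 = ((d : ℝ) + 1 / 2) * zetaR 2
      + ((d : ℝ) + 1 / 2) * (2 * (d : ℝ) ^ 3 + 4 * (d : ℝ) ^ 2 + 4 * d + 1)
        / (2 * (d : ℝ) ^ 4 * ((d : ℝ) + 1) ^ 2))
    (h4 : a4 = -(2 * (d : ℝ) + 1) * d * zetaR 3 + ((d : ℝ) + 1 / 2) * zetaR 2
      - (60 * (d : ℝ) ^ 7 + 180 * (d : ℝ) ^ 6 + 350 * (d : ℝ) ^ 5 + 585 * (d : ℝ) ^ 4
          + 597 * (d : ℝ) ^ 3 + 331 * (d : ℝ) ^ 2 + 96 * d + 12)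
        / (60 * (d : ℝ) ^ 5 * ((d : ℝ) + 1) ^ 3))
    (h5 : a5 = 3 * ((d : ℝ) + 1 / 2) * (d : ℝ) ^ 2 * zetaR 4
      - (3 * (d : ℝ) ^ 2 + 3 * d + 5 / 6) * zetaR 3 - ((d : ℝ) + 1 / 2) * zetaR 2
      - (12 * (d : ℝ) ^ 8 - 24 * (d : ℝ) ^ 7 - 216 * (d : ℝ) ^ 6 - 387 * (d : ℝ) ^ 5
          - 339 * (d : ℝ) ^ 4 - 186 * (d : ℝ) ^ 3 - 72 * (d : ℝ) ^ 2 - 18 * d - 2)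
        / (12 * (d : ℝ) ^ 6 * ((d : ℝ) + 1) ^ 3)) :
    (fun b : ℕ => irwinSum b d 1 -
      ((b : ℝ) * Real.log b
        + a1 / b + a2 / (b : ℝ) ^ 2 + a3 / (b : ℝ) ^ 3 + a4 / (b : ℝ) ^ 4 + a5 / (b : ℝ) ^ 5))
      =O[atTop] fun b : ℕ => ((b : ℝ) ^ 6)⁻¹ := by
  have hd0 : d ≠ 0 := Nat.one_le_iff_ne_zero.1 hd
  have hintegral := (Irwin.IsBigOInvPow.inv_pow_mul 0 fun _ ↦ -1).mul
    (Irwin.isBigOInvPow_integral_branch_one_div_add_sub hd0 6) (k := 6)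
  have hbranch := (Irwin.IsBigOInvPow.inv_pow_mul 1 fun _ ↦ 1).mul
    (Irwin.isBigOInvPow_irwinDiscrepancy_branch_sub hd0) (k := 6)
  have hremainder := Irwin.IsBigOInvPow.inv_pow_mul 6 fun h ↦ (d + 1 / 2) *
    (-3 / d ^ 2 - (1 / 2 * (1 / d ^ 2 - 1 / (d + 1) ^ 2) - 1 / d ^ 2) -
      (1 / 6 * (1 / d ^ 3 - 1 / (d + 1) ^ 3) + 2 / d ^ 2) * h + 3 / d ^ 2 * h ^ 2 +
      2 * (-1 + 1 / 2 * (1 - 1 / d ^ 2 + 1 / (d + 1) ^ 2) - (zetaR 2 - 1 / d ^ 2)))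
  have hsum := (hintegral.add
    (Irwin.isBigOInvPow_irwinDiscrepancy_transfer_one_div_add_sub hd0)).add
    (((Irwin.isBigOInvPow_irwinDiscrepancy_one_transfer_sub hd0).add hbranch).add hremainder)
  refine IsBigO.congr_right (hsum.congr (d := d) fun b hb ↦ ?_) fun b ↦ inv_pow _ _
  have hb0 : (b : ℝ) ≠ 0 := by exact_mod_cast (Nat.zero_lt_of_lt hb).ne'
  rw [Irwin.irwinSum_one_eq hd0 hb, h1, h2, h3, h4, h5]
  simp only [sum_range_succ, range_zero, sum_empty]
  field_simp
  ring
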